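/- arXiv:1405.3597 — 7 statements merged into one kernel-verified Lean document; each statement's English description precedes it below -/
import Mathlib

section
/- Let R be an infinite commutative integral domain. A *-ary polynomial function F on R is barycentrically associative if and only if one of the following two conditions holds: (i) there exist z ∈ R and an integer k ≥ 1 or k = ∞, with k ≤ n(z), such that F ∈ [M^z]_k (i.e., F_n = M_n^z for every n < k and F_n is a constant function for every n ≥ k); or (ii) there exists a polynomial function Q : R² → R of degree ≥ 1 such that F_1(x) = x, F_2(x,y) = Q(x,y)·x + (1 − Q(x,y))·y, and F_n is a constant function for every n ≥ 3. -/
/-- Barycentric associativity of a `*`-ary function. -/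
def BAssoc {X : Type*} (F : ∀ n : ℕ, (Fin n → X) → X) : Prop :=
  ∀ (a b k : ℕ), 1 ≤ k → ∀ (x : Fin a → X) (y : Fin k → X) (z : Fin b → X),
    F (a + k + b) (Fin.append (Fin.append x y) z) =
      F (a + k + b) (Fin.append (Fin.append x (fun _ : Fin k => F k y)) z)

/-- `Δ_n^z = Σ_{i=1}^n z^{n-i} (1-z)^{i-1}` (here reindexed from `0` to `n-1`). -/
def Delta {R : Type*} [CommRing R] (n : ℕ) (z : R) : R :=
  ∑ i ∈ Finset.range n, z ^ (n - 1 - i) * (1 - z) ^ i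

/-- The weighted arithmetic mean `M_n^z`. (When `Δ_n^z` is not invertible,
`Ring.inverse` returns `0`, so this is the constant `0` function, in accordance with
the definition of the `*`-ary function `M^z`.) -/
noncomputable def Mz {R : Type*} [CommRing R] (n : ℕ) (z : R) (x : Fin n → R) : R :=
  Ring.inverse (Delta n z) * ∑ i : Fin n, z ^ (n - 1 - (i : ℕ)) * (1 - z) ^ (i : ℕ) * x i

/-- `n(z) = inf { n ≥ 1 : Δ_n^z is not invertible }`, an element of `ℕ∞ = ℕ ∪ {∞}`
(with `n(z) = ∞` when `Δ_n^z` is invertible for every `n ≥ 1`). -/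
noncomputable def nz {R : Type*} [CommRing R] (z : R) : ℕ∞ :=
  sInf {c : ℕ∞ | ∃ m : ℕ, c = (m : ℕ∞) ∧ 1 ≤ m ∧ ¬ IsUnit (Delta m z)}

/-!
A nonconstant `F n` has infinite image, and B-associativity makes each of its values a fixed point
of its restriction to the diagonal, which is therefore the identity. Constancy passes from `F n` to
`F (n + 1)`.

If `F 3` is not constant, then `A (x, y) = F 3 (x, x, y)` and `B (x, y) = F 3 (x, y, y)` satisfy
`B (x, F 2 (x, y)) = A (x, y)` and `A (F 2 (x, y), y) = B (x, y)`. Give the substituted variable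
the weight `d = deg (F 2)`. For `d ≥ 2` the weighted degrees of `A` and `B` are then at most their
common degree, and restricting top forms to the diagonal forces `A = y` and `B = x`, contradicting
the first equation. Hence `F 2 (x, y) = z x + (1 - z) y` for some `z`.

In that case `F n` is invariant under translations along `z e_{i+1} - (1 - z) e_i`. Modulo these
directions `e_i ≡ z ^ (n - i) * (1 - z) ^ (i - 1) • u` with `u = ∑ (n - 1).choose (j - 1) • e_j`,
by the binomial theorem for `(z + (1 - z)) ^ (n - 1)`. So `F n` is a univariate polynomial in
`∑ z ^ (n - i) * (1 - z) ^ (i - 1) * x_i`, and the identity on the diagonal makes `Δ_n^z` a unit and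
`F n` equal to `M_n^z`.
-/

open MvPolynomial

section Substitution

variable {σ R S : Type*} [CommSemiring R] [CommSemiring S] [Algebra R S]
  {v : σ → Polynomial S} {w : σ → ℕ}

theorem natDegree_finsuppProd_pow_le_weight (hv : ∀ i, (v i).natDegree ≤ w i) (s : σ →₀ ℕ) :
    (s.prod fun i e => v i ^ e).natDegree ≤ Finsupp.weight w s := by
  rw [Finsupp.weight_apply]
  refine (Polynomial.natDegree_prod_le _ _).trans (Finset.sum_le_sum fun i _ => ?_)
  exact Polynomial.natDegree_pow_le_of_le _ (hv i)

theorem coeff_finsuppProd_pow_weight (hv : ∀ i, (v i).natDegree ≤ w i) (s : σ →₀ ℕ) :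
    (s.prod fun i e => v i ^ e).coeff (Finsupp.weight w s) =
      s.prod fun i e => (v i).coeff (w i) ^ e := by
  induction s using Finsupp.induction_linear with
  | zero => simp
  | add s t hs ht =>
    rw [Finsupp.prod_add_index' (by simp) (by simp [pow_add]), map_add,
      Polynomial.coeff_mul_add_eq_of_natDegree_le (natDegree_finsuppProd_pow_le_weight hv s)
        (natDegree_finsuppProd_pow_le_weight hv t), hs, ht,
      Finsupp.prod_add_index' (by simp) (by simp [pow_add])]
  | single i e =>
    simpa [Finsupp.weight_single] using Polynomial.coeff_pow_of_natDegree_le (hv i)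

theorem coeff_aeval_eq_aeval_weightedHomogeneousComponent (hv : ∀ i, (v i).natDegree ≤ w i)
    {p : MvPolynomial σ R} {n : ℕ} (hn : p.weightedTotalDegree w ≤ n) :
    (aeval v p).coeff n =
      aeval (fun i => (v i).coeff (w i)) (weightedHomogeneousComponent w n p) := by
  classical
  rw [weightedHomogeneousComponent_apply, map_sum, Finset.sum_filter, aeval_def v, eval₂_eq,
    Polynomial.finsetSum_coeff]
  simp only [aeval_monomial, Polynomial.algebraMap_apply, Polynomial.coeff_C_mul]
  refine Finset.sum_congr rfl fun s hs => ?_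
  split_ifs with hsn
  · rw [← hsn]
    exact congrArg _ (coeff_finsuppProd_pow_weight hv s)
  · have hlt : Finsupp.weight w s < n :=
      lt_of_le_of_ne ((le_weightedTotalDegree w hs).trans hn) hsn
    exact mul_eq_zero_of_right _ <| Polynomial.coeff_eq_zero_of_natDegree_lt <|
      (natDegree_finsuppProd_pow_le_weight hv s).trans_lt hlt

theorem natDegree_aeval_le_weightedTotalDegree (hv : ∀ i, (v i).natDegree ≤ w i)
    (p : MvPolynomial σ R) : (aeval v p).natDegree ≤ p.weightedTotalDegree w := by
  refine Polynomial.natDegree_le_iff_coeff_eq_zero.mpr fun n hn => ?_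
  rw [coeff_aeval_eq_aeval_weightedHomogeneousComponent hv hn.le,
    weightedHomogeneousComponent_eq_zero _ _ hn, map_zero]

end Substitution

section TopForm

variable {R : Type*} [CommSemiring R] {w : Fin 2 → ℕ} {n : ℕ} {k : Fin 2}
  {p : MvPolynomial (Fin 2) R}

theorem injOn_support_of_isWeightedHomogeneous (hp : IsWeightedHomogeneous w p n)
    (hw : ∀ i, i ≠ k → w i ≠ 0) : Set.InjOn (fun s : Fin 2 →₀ ℕ => s k) p.support := by
  intro s hs t ht hst
  have hweight : Finsupp.weight w s = Finsupp.weight w t :=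
    (hp (mem_support_iff.mp hs)).trans (hp (mem_support_iff.mp ht)).symm
  simp only [Finsupp.weight_apply, Finsupp.sum_fintype, Fin.sum_univ_two, smul_eq_mul,
    zero_mul, implies_true] at hweight
  ext i
  fin_cases k <;> fin_cases i <;> simp_all

/-- The univariate polynomial obtained from `p` by setting the variable other than `X k` to `1`. -/
noncomputable def dehomogenize (k : Fin 2) (p : MvPolynomial (Fin 2) R) : Polynomial R :=
  aeval (Function.update 1 k Polynomial.X) p

theorem aeval_dehomogenize {S : Type*} [CommSemiring S] [Algebra R S] (k : Fin 2)
    (p : MvPolynomial (Fin 2) R) (a : S) :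
    Polynomial.aeval a (dehomogenize k p) = aeval (Function.update 1 k a) p := by
  rw [dehomogenize, comp_aeval_apply]
  congr 2 with i
  by_cases hi : i = k <;> simp [hi]

theorem eval_one_dehomogenize (k : Fin 2) (p : MvPolynomial (Fin 2) R) :
    (dehomogenize k p).eval 1 = eval 1 p := by
  rw [← Polynomial.coe_aeval_eq_eval, aeval_dehomogenize, aeval_eq_eval]
  exact congrArg (eval · p) (Function.update_eq_self k 1)

theorem dehomogenize_ne_zero (hp : IsWeightedHomogeneous w p n) (hp0 : p ≠ 0)
    (hw : ∀ i, i ≠ k → w i ≠ 0) : dehomogenize k p ≠ 0 := by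
  obtain ⟨s, hs⟩ := support_nonempty.mpr hp0
  have hcoeff : (dehomogenize k p).coeff (s k) = p.coeff s := by
    rw [dehomogenize, aeval_def, eval₂_eq', Polynomial.finsetSum_coeff,
      Finset.sum_eq_single_of_mem s hs]
    · simp [Function.update_apply, ite_pow]
    · intro t ht hts
      have hstk : s k ≠ t k := fun h =>
        hts (injOn_support_of_isWeightedHomogeneous hp hw ht hs h.symm)
      simp [Function.update_apply, ite_pow, Polynomial.coeff_X_pow, hstk]
  intro h
  rw [h, Polynomial.coeff_zero] at hcoeff
  exact mem_support_iff.mp hs hcoeff.symm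

end TopForm

section Diagonal

variable {σ R : Type*} [CommSemiring R] {p : MvPolynomial σ R}

/-- The univariate polynomial `p(t, …, t)`, the restriction of `p` to the diagonal. -/
noncomputable def diag (p : MvPolynomial σ R) : Polynomial R :=
  aeval (fun _ => Polynomial.X) p

theorem eval_diag (p : MvPolynomial σ R) (t : R) : (diag p).eval t = eval (fun _ => t) p := by
  rw [diag, ← Polynomial.coe_aeval_eq_eval, comp_aeval_apply, aeval_eq_eval]
  simp only [Polynomial.aeval_X]

theorem diag_rename {τ : Type*} (φ : σ → τ) (p : MvPolynomial σ R) :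
    diag (rename φ p) = diag p :=
  aeval_rename _ _ _

theorem coeff_diag_eq_eval_homogeneousComponent {n : ℕ} (hn : p.totalDegree ≤ n) :
    (diag p).coeff n = eval 1 (homogeneousComponent n p) := by
  rw [diag, coeff_aeval_eq_aeval_weightedHomogeneousComponent (w := 1)
    (fun _ => Polynomial.natDegree_X_le) (by rwa [weightedTotalDegree_one]), aeval_eq_eval]
  simp only [Pi.one_apply, Polynomial.coeff_X_one]
  rfl

end Diagonal

section WeightedDegree

variable {σ R : Type*} [CommSemiring R] {p : MvPolynomial σ R}

theorem weightedHomogeneousComponent_weightedTotalDegree_ne_zero (w : σ → ℕ) (hp : p ≠ 0) :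
    weightedHomogeneousComponent w (p.weightedTotalDegree w) p ≠ 0 := by
  classical
  obtain ⟨s, hs, hsup⟩ :=
    p.support.exists_mem_eq_sup (support_nonempty.mpr hp) (Finsupp.weight w)
  refine ne_zero_iff.mpr ⟨s, ?_⟩
  rw [coeff_weightedHomogeneousComponent, weightedTotalDegree, if_pos hsup.symm]
  exact mem_support_iff.mp hs

theorem homogeneousComponent_totalDegree_ne_zero (hp : p ≠ 0) :
    homogeneousComponent p.totalDegree p ≠ 0 := by
  rw [← weightedTotalDegree_one]
  exact weightedHomogeneousComponent_weightedTotalDegree_ne_zero 1 hp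

theorem totalDegree_le_weightedTotalDegree {w : σ → ℕ} (hw : ∀ i, 1 ≤ w i)
    (p : MvPolynomial σ R) : p.totalDegree ≤ p.weightedTotalDegree w := by
  rw [← weightedTotalDegree_one]
  refine Finset.sup_mono_fun fun s _ => ?_
  simp only [Finsupp.weight_apply, Pi.one_apply]
  exact Finset.sum_le_sum fun i _ => Nat.mul_le_mul_left _ (hw i)

end WeightedDegree

section GenericLine

variable {R : Type*} [CommSemiring R]

variable (R) in
/-- The generic line through the origin on which the variable other than `X k` is the parameter,
with slope an indeterminate over `R`. -/
noncomputable def genericLine (k i : Fin 2) : Polynomial (Polynomial R) :=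
  Polynomial.C (Function.update (1 : Fin 2 → Polynomial R) k Polynomial.X i) * Polynomial.X

theorem natDegree_genericLine_le (k i : Fin 2) :
    (genericLine R k i).natDegree ≤ (1 : Fin 2 → ℕ) i :=
  (Polynomial.natDegree_C_mul_le _ _).trans Polynomial.natDegree_X_le

theorem coeff_aeval_genericLine_totalDegree (k : Fin 2) (p : MvPolynomial (Fin 2) R) :
    (aeval (genericLine R k) p).coeff p.totalDegree =
      dehomogenize k (homogeneousComponent p.totalDegree p) := by
  rw [coeff_aeval_eq_aeval_weightedHomogeneousComponent (natDegree_genericLine_le k)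
    (weightedTotalDegree_one p).le]
  simp [genericLine, dehomogenize, homogeneousComponent]

theorem natDegree_aeval_genericLine_le (k : Fin 2) (p : MvPolynomial (Fin 2) R) :
    (aeval (genericLine R k) p).natDegree ≤ p.totalDegree := by
  rw [← weightedTotalDegree_one]
  exact natDegree_aeval_le_weightedTotalDegree (natDegree_genericLine_le k) p

end GenericLine

section DiagonalTopForm

variable {R : Type*} [CommSemiring R] {k : Fin 2} {p : MvPolynomial (Fin 2) R}

theorem eval_one_homogeneousComponent_of_diag_eq_X (hp : diag p = Polynomial.X)
    (hdeg : p.totalDegree ≠ 1) : eval 1 (homogeneousComponent p.totalDegree p) = 0 := by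
  rw [← coeff_diag_eq_eval_homogeneousComponent le_rfl, hp, Polynomial.coeff_X_of_ne_one hdeg]

theorem ne_zero_of_diag_eq_X [Nontrivial R] (hp : diag p = Polynomial.X) : p ≠ 0 := by
  rintro rfl
  simp [diag, Polynomial.X_ne_zero.symm] at hp

theorem dehomogenize_of_notMem_vars (hk : k ∉ p.vars) :
    dehomogenize k p = Polynomial.C (eval 1 p) := by
  have hcongr : aeval (Function.update (1 : Fin 2 → Polynomial R) k Polynomial.X) p = aeval 1 p :=
    eval₂Hom_congr' rfl
      (fun i hi _ => Function.update_of_ne (ne_of_mem_of_not_mem hi hk) _ _) rfl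
  rw [dehomogenize, hcongr]
  exact (comp_aeval_apply (1 : Fin 2 → R) (Algebra.ofId R (Polynomial R)) p).symm.trans
    (by simp [Algebra.ofId_apply, aeval_eq_eval])

theorem eq_X_rev_of_diag_eq_X_of_notMem_vars (hp : diag p = Polynomial.X) (hk : k ∉ p.vars) :
    p = X k.rev := by
  calc p = aeval X p := (aeval_X_left_apply p).symm
    _ = aeval (fun _ => X k.rev) p := by
      refine eval₂Hom_congr' rfl (fun i hi _ => congrArg X ?_) rfl
      have hne := ne_of_mem_of_not_mem hi hk
      rw [Fin.ext_iff, Fin.val_rev]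
      lia
    _ = Polynomial.aeval (X k.rev) (diag p) := by
      rw [diag, comp_aeval_apply]
      simp only [Polynomial.aeval_X]
    _ = X k.rev := by rw [hp, Polynomial.aeval_X]

theorem weight_update_one (k : Fin 2) (d : ℕ) (s : Fin 2 →₀ ℕ) :
    Finsupp.weight (Function.update (1 : Fin 2 → ℕ) k d) s + s k = s.degree + s k * d := by
  fin_cases k <;> simp [Finsupp.weight_apply, Finsupp.sum_fintype, Finsupp.degree_eq_sum] <;> ring

-- The weights keep `X k` out of the top form of `p`, whose dehomogenization is then a nonzero
-- constant; if `p.totalDegree ≠ 1`, then `diag p = X` makes its value at `1` vanish.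
theorem eq_X_rev_of_weightedTotalDegree_le [Nontrivial R] {d : ℕ} (hd : 2 ≤ d)
    (hp : diag p = Polynomial.X)
    (hle : p.weightedTotalDegree (Function.update (1 : Fin 2 → ℕ) k d) ≤ p.totalDegree) :
    p = X k.rev := by
  have hweight : ∀ s ∈ p.support, s.degree + s k * d ≤ p.totalDegree + s k := fun s hs => by
    rw [← weight_update_one]
    exact Nat.add_le_add_right ((le_weightedTotalDegree _ hs).trans hle) _
  have htop : k ∉ (homogeneousComponent p.totalDegree p).vars := by
    rw [mem_vars_iff_mem_support]
    rintro ⟨s, hs, hsk⟩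
    rw [mem_support_iff, coeff_homogeneousComponent, ne_eq, ite_eq_right_iff,
      Classical.not_imp] at hs
    have hpos : 0 < s k := Nat.pos_of_ne_zero (Finsupp.mem_support_iff.mp hsk)
    nlinarith [hs.1, hweight s (mem_support_iff.mpr hs.2)]
  have hdeg : p.totalDegree = 1 := by
    by_contra hne
    refine dehomogenize_ne_zero (k := k) (homogeneousComponent_isHomogeneous p.totalDegree p)
      (homogeneousComponent_totalDegree_ne_zero (ne_zero_of_diag_eq_X hp)) (by simp) ?_
    rw [dehomogenize_of_notMem_vars htop, eval_one_homogeneousComponent_of_diag_eq_X hp hne,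
      map_zero]
  refine eq_X_rev_of_diag_eq_X_of_notMem_vars hp ?_
  rw [mem_vars_iff_mem_support]
  rintro ⟨s, hs, hsk⟩
  have hpos : 0 < s k := Nat.pos_of_ne_zero (Finsupp.mem_support_iff.mp hsk)
  nlinarith [hweight s hs, Finsupp.le_degree k s]

end DiagonalTopForm

section SubstitutionDegree

variable {R : Type*} [CommRing R] [IsDomain R] {f p q : MvPolynomial (Fin 2) R}

theorem transcendental_dehomogenize_homogeneousComponent (k : Fin 2)
    (hf : diag f = Polynomial.X) (hdeg : f.totalDegree ≠ 1) :
    Transcendental R (dehomogenize k (homogeneousComponent f.totalDegree f)) := by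
  set l := dehomogenize k (homogeneousComponent f.totalDegree f)
  have hl0 : l ≠ 0 :=
    dehomogenize_ne_zero (homogeneousComponent_isHomogeneous _ _)
      (homogeneousComponent_totalDegree_ne_zero (ne_zero_of_diag_eq_X hf)) (by simp)
  have hl1 : l.eval 1 = 0 := by
    rw [eval_one_dehomogenize, eval_one_homogeneousComponent_of_diag_eq_X hf hdeg]
  refine Polynomial.transcendental l (fun hdegl => hl0 ?_)
    (mem_nonZeroDivisors_of_ne_zero (Polynomial.leadingCoeff_ne_zero.mpr hl0))
  rw [Polynomial.eq_C_of_natDegree_eq_zero hdegl] at hl1 ⊢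
  simpa using hl1

-- Restricted to the generic line, the substituted variable has a leading coefficient transcendental
-- over `R`, so that the top weighted form of `p` cannot vanish.
theorem weightedTotalDegree_le_totalDegree_bind₁_update (k : Fin 2) (hf : diag f = Polynomial.X)
    (hdeg : f.totalDegree ≠ 1) (p : MvPolynomial (Fin 2) R) :
    p.weightedTotalDegree (Function.update (1 : Fin 2 → ℕ) k f.totalDegree) ≤
      (bind₁ (Function.update X k f) p).totalDegree := by
  obtain rfl | hp := eq_or_ne p 0
  · simp [weightedTotalDegree_zero]
  set w : Fin 2 → ℕ := Function.update 1 k f.totalDegree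
  let v : Fin 2 → Polynomial (Polynomial R) := fun i =>
    aeval (genericLine R k) (Function.update X k f i)
  have hv : ∀ i, (v i).natDegree ≤ w i := by
    intro i
    obtain rfl | hi := eq_or_ne i k
    · simpa [v, w] using natDegree_aeval_genericLine_le i f
    · simpa [v, w, hi] using natDegree_genericLine_le (R := R) k i
  have hlead : (fun i => (v i).coeff (w i)) =
      Function.update (1 : Fin 2 → Polynomial R) k
        (dehomogenize k (homogeneousComponent f.totalDegree f)) := by
    ext1 i
    obtain rfl | hi := eq_or_ne i k
    · simpa [v, w] using coeff_aeval_genericLine_totalDegree i f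
    · simp [v, w, genericLine, hi]
  have hcoeff : (aeval v p).coeff (p.weightedTotalDegree w) ≠ 0 := by
    rw [coeff_aeval_eq_aeval_weightedHomogeneousComponent hv le_rfl, hlead, ← aeval_dehomogenize]
    refine fun h => dehomogenize_ne_zero
      (weightedHomogeneousComponent_isWeightedHomogeneous (p.weightedTotalDegree w) p)
      (weightedHomogeneousComponent_weightedTotalDegree_ne_zero w hp)
      (fun i hi => by simp [w, hi])
      (transcendental_iff.mp (transcendental_dehomogenize_homogeneousComponent k hf hdeg) _ h)
  calc p.weightedTotalDegree w ≤ (aeval v p).natDegree := Polynomial.le_natDegree_of_ne_zero hcoeff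
    _ = (aeval (genericLine R k) (bind₁ (Function.update X k f) p)).natDegree := by
      rw [aeval_bind₁]
    _ ≤ (bind₁ (Function.update X k f) p).totalDegree := natDegree_aeval_genericLine_le k _

theorem totalDegree_le_one_of_bind₁_eq (hf : diag f = Polynomial.X)
    (hp : diag p = Polynomial.X) (hq : diag q = Polynomial.X)
    (hpq : bind₁ (Function.update X 1 f) q = p) (hqp : bind₁ (Function.update X 0 f) p = q) :
    f.totalDegree ≤ 1 := by
  by_contra! hdeg
  have hq_le := weightedTotalDegree_le_totalDegree_bind₁_update 1 hf hdeg.ne' q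
  have hp_le := weightedTotalDegree_le_totalDegree_bind₁_update 0 hf hdeg.ne' p
  rw [hpq] at hq_le
  rw [hqp] at hp_le
  have hw : ∀ k i : Fin 2, 1 ≤ Function.update (1 : Fin 2 → ℕ) k f.totalDegree i := fun k i => by
    by_cases hi : i = k <;> simp [hi, hdeg.le]
  have hdeg_eq : p.totalDegree = q.totalDegree :=
    le_antisymm ((totalDegree_le_weightedTotalDegree (hw 0) p).trans hp_le)
      ((totalDegree_le_weightedTotalDegree (hw 1) q).trans hq_le)
  have hp1 : p = X 1 :=
    eq_X_rev_of_weightedTotalDegree_le (k := 0) hdeg hp (hp_le.trans hdeg_eq.ge)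
  have hq0 : q = X 0 :=
    eq_X_rev_of_weightedTotalDegree_le (k := 1) hdeg hq (hq_le.trans hdeg_eq.le)
  rw [hq0, hp1, bind₁_X_right, Function.update_of_ne zero_ne_one] at hpq
  exact zero_ne_one (X_injective hpq)

end SubstitutionDegree

section FixedPoints

variable {σ R : Type*} [CommRing R] [IsDomain R] [Infinite R] {p : MvPolynomial σ R}

theorem exists_mem_eq_C_of_forall_eval_mem (s : Finset R) (hs : ∀ x, eval x p ∈ s) :
    ∃ r ∈ s, p = C r := by
  have hprod : ∏ r ∈ s, (p - C r) = 0 := funext fun x => by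
    rw [map_prod, map_zero]
    exact Finset.prod_eq_zero (hs x) (by simp)
  obtain ⟨r, hr, hpr⟩ := Finset.prod_eq_zero_iff.mp hprod
  exact ⟨r, hr, sub_eq_zero.mp hpr⟩

theorem diag_eq_X_of_eval_const_eval (hconst : ∀ r, p ≠ C r)
    (hp : ∀ x, eval (fun _ => eval x p) p = eval x p) : diag p = Polynomial.X := by
  classical
  by_contra hne
  obtain ⟨r, -, hr⟩ := exists_mem_eq_C_of_forall_eval_mem (p := p)
    (diag p - Polynomial.X).roots.toFinset fun x => by
      simp [sub_ne_zero.mpr hne, eval_diag, hp x]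
  exact hconst r hr

end FixedPoints

section Quotient

variable {R : Type*} [CommRing R] {p : MvPolynomial (Fin 2) R}

theorem X_zero_sub_X_one_dvd (p : MvPolynomial (Fin 2) R) :
    X 0 - X 1 ∣ p - bind₁ (fun _ => X 1) p := by
  induction p using MvPolynomial.induction_on with
  | C r => simp
  | add p q hp hq =>
    rw [map_add, add_sub_add_comm]
    exact dvd_add hp hq
  | mul_X p i hp =>
    have hi : (X 0 - X 1 : MvPolynomial (Fin 2) R) ∣ X i - X 1 := by fin_cases i <;> simp
    rw [map_mul, bind₁_X_right]
    exact dvd_mul_sub_mul hp hi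

theorem exists_eq_X_one_add_mul_of_diag_eq_X (hp : diag p = Polynomial.X) :
    ∃ q, p = X 1 + (X 0 - X 1) * q := by
  have hbind : bind₁ (fun _ => X 1) p = (X 1 : MvPolynomial (Fin 2) R) := by
    have h := congrArg (Polynomial.aeval (X 1 : MvPolynomial (Fin 2) R)) hp
    rw [diag, comp_aeval_apply] at h
    simpa only [Polynomial.aeval_X, ← aeval_eq_bind₁] using h
  obtain ⟨q, hq⟩ := X_zero_sub_X_one_dvd p
  rw [hbind] at hq
  exact ⟨q, by rw [← hq, add_sub_cancel]⟩

theorem totalDegree_eq_zero_of_totalDegree_X_one_add_mul_le_one [IsDomain R]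
    {q : MvPolynomial (Fin 2) R}
    (hdeg : (X 1 + (X 0 - X 1) * q).totalDegree ≤ 1) : q.totalDegree = 0 := by
  obtain rfl | hq := eq_or_ne q 0
  · exact totalDegree_zero
  have hX : (X 0 - X 1 : MvPolynomial (Fin 2) R) ≠ 0 :=
    sub_ne_zero.mpr fun h => zero_ne_one (X_injective h)
  have hmul : ((X 0 - X 1) * q).totalDegree = 1 + q.totalDegree := by
    rw [totalDegree_mul_of_isDomain hX hq,
      ((isHomogeneous_X R 0).sub (isHomogeneous_X R 1)).totalDegree hX]
  have hle : ((X 0 - X 1) * q).totalDegree ≤ 1 := by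
    rw [← add_sub_cancel_left (X 1) ((X 0 - X 1) * q)]
    exact (totalDegree_sub _ _).trans (max_le hdeg (totalDegree_X 1).le)
  lia

end Quotient

section BAssociativity

variable {X : Type*} {F : ∀ n : ℕ, (Fin n → X) → X}

/-- The tuple `v` with each of its entries at the positions `a, …, a + k - 1` replaced by the value
of `F k` at these entries. -/
def replaceBlock (F : ∀ n : ℕ, (Fin n → X) → X) {n a k : ℕ} (h : a + k ≤ n) (v : Fin n → X) :
    Fin n → X := fun i =>
  if a ≤ i ∧ (i : ℕ) < a + k then F k (fun j => v ⟨a + j, by lia⟩) else v i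

theorem BAssoc.apply_replaceBlock (hF : BAssoc F) {n a k : ℕ} (h : a + k ≤ n) (hk : 1 ≤ k)
    (v : Fin n → X) : F n (replaceBlock F h v) = F n v := by
  obtain ⟨b, rfl⟩ := Nat.exists_eq_add_of_le h
  let x : Fin a → X := fun i => v (Fin.castAdd b (Fin.castAdd k i))
  let y : Fin k → X := fun i => v (Fin.castAdd b (Fin.natAdd a i))
  let z : Fin b → X := fun i => v (Fin.natAdd (a + k) i)
  have hv : Fin.append (Fin.append x y) z = v :=
    (congrArg (Fin.append · z) Fin.append_castAdd_natAdd).trans Fin.append_castAdd_natAdd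
  have hreplace : replaceBlock F h v = Fin.append (Fin.append x fun _ => F k y) z := by
    ext i
    refine Fin.addCases (fun i => Fin.addCases (fun i => ?_) (fun i => ?_) i) (fun i => ?_) i <;>
      simp only [Fin.append_left, Fin.append_right, replaceBlock, Fin.val_castAdd, Fin.val_natAdd]
    · rw [if_neg (by lia)]
    · rw [if_neg (by lia)]
    · rw [if_pos (by lia)]
      rfl
  rw [hreplace, ← hF a b k hk, hv]

theorem BAssoc.apply_const_apply (hF : BAssoc F) {n : ℕ} (hn : 1 ≤ n) (v : Fin n → X) :
    F n (fun _ => F n v) = F n v := by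
  have h : replaceBlock F (zero_add n).le v = fun _ => F n v := by
    ext i
    simp [replaceBlock]
  rw [← h, hF.apply_replaceBlock _ hn]

theorem BAssoc.apply_congr (hF : BAssoc F) {n a k : ℕ} (h : a + k ≤ n) (hk : 1 ≤ k)
    {u v : Fin n → X} (hout : ∀ i : Fin n, ¬(a ≤ i ∧ (i : ℕ) < a + k) → u i = v i)
    (hblock : F k (fun j => u ⟨a + j, by lia⟩) = F k (fun j => v ⟨a + j, by lia⟩)) :
    F n u = F n v := by
  rw [← hF.apply_replaceBlock h hk u, ← hF.apply_replaceBlock h hk v]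
  congr 1 with i
  unfold replaceBlock
  split_ifs with hi
  exacts [hblock, hout i hi]

/-- `f` is a constant function. -/
def IsConstant {α β : Type*} (f : α → β) : Prop :=
  ∃ c, ∀ x, f x = c

theorem IsConstant.apply_eq {α β : Type*} {f : α → β} (hf : IsConstant f) (x y : α) :
    f x = f y := by
  obtain ⟨c, hc⟩ := hf
  rw [hc, hc]

theorem BAssoc.isConstant_succ (hF : BAssoc F) {n : ℕ} (hn : 1 ≤ n) (h : IsConstant (F n)) :
    IsConstant (F (n + 1)) := by
  obtain ⟨c, hc⟩ := h
  refine ⟨F (n + 1) (fun _ => c), fun v => ?_⟩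
  have hreplace : replaceBlock F (add_comm 1 n).le
      (replaceBlock F ((zero_add n).trans_le n.le_succ) v) = fun _ => c := by
    ext i
    simp only [replaceBlock, hc]
    split_ifs <;> first | rfl | lia
  rw [← hreplace, hF.apply_replaceBlock _ hn, hF.apply_replaceBlock _ hn]

theorem BAssoc.isConstant_of_le (hF : BAssoc F) {m n : ℕ} (hm : 1 ≤ m) (hmn : m ≤ n)
    (h : IsConstant (F m)) : IsConstant (F n) :=
  Nat.le_induction h (fun _ hmn ih => hF.isConstant_succ (hm.trans hmn) ih) n hmn

end BAssociativity

section Ternary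

theorem eval_bind₁_update_X {σ R : Type*} [DecidableEq σ] [CommSemiring R] (x : σ → R) (k : σ)
    (f p : MvPolynomial σ R) :
    eval x (bind₁ (Function.update X k f) p) = eval (Function.update x k (eval x f)) p := by
  rw [← aeval_eq_eval, aeval_bind₁, aeval_eq_eval]
  congr 2 with i
  by_cases hi : i = k <;> simp [hi, aeval_eq_eval]

variable {R : Type*} [CommRing R] [IsDomain R] [Infinite R] {F : ∀ n : ℕ, (Fin n → R) → R}

theorem BAssoc.diag_eq_X (hF : BAssoc F) {n : ℕ} (hn : 1 ≤ n) {p : MvPolynomial (Fin n) R}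
    (hp : ∀ x, F n x = eval x p) (hconst : ¬IsConstant (F n)) : diag p = Polynomial.X := by
  refine diag_eq_X_of_eval_const_eval (fun r hr => hconst ⟨r, fun x => ?_⟩) fun x => ?_
  · rw [hp, hr, eval_C]
  · simp only [← hp, hF.apply_const_apply hn]

theorem BAssoc.apply_one_of_not_isConstant (hF : BAssoc F) {p : MvPolynomial (Fin 1) R}
    (hp : ∀ x, F 1 x = eval x p) (hconst : ¬IsConstant (F 1)) (x : Fin 1 → R) : F 1 x = x 0 := by
  have hx : x = fun _ => x 0 := by
    ext i
    rw [Subsingleton.elim i 0]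
  rw [hp, hx, ← eval_diag, hF.diag_eq_X le_rfl hp hconst, Polynomial.eval_X]

theorem BAssoc.totalDegree_le_one_of_not_isConstant_three (hF : BAssoc F)
    {f : MvPolynomial (Fin 2) R} (hf : ∀ x, F 2 x = eval x f)
    {g : MvPolynomial (Fin 3) R} (hg : ∀ x, F 3 x = eval x g) (hconst : ¬IsConstant (F 3)) :
    f.totalDegree ≤ 1 := by
  have hdiagf : diag f = Polynomial.X := hF.diag_eq_X one_le_two hf fun h =>
    hconst (hF.isConstant_succ one_le_two h)
  have hdiagg : diag g = Polynomial.X := hF.diag_eq_X (by lia) hg hconst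
  refine totalDegree_le_one_of_bind₁_eq (p := rename ![0, 0, 1] g) (q := rename ![0, 1, 1] g)
    hdiagf ((diag_rename _ g).trans hdiagg) ((diag_rename _ g).trans hdiagg) ?_ ?_ <;>
    refine MvPolynomial.funext fun x => ?_ <;>
    rw [eval_bind₁_update_X, eval_rename, eval_rename, ← hf, ← hg, ← hg]
  · refine hF.apply_congr (a := 1) (k := 2) le_rfl one_le_two (fun i hi => ?_) ?_
    · obtain rfl : i = 0 := by lia
      simp
    · convert hF.apply_const_apply one_le_two x using 2 <;> ext j <;> fin_cases j <;> rfl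
  · refine hF.apply_congr (a := 0) (k := 2) (by lia) one_le_two (fun i hi => ?_) ?_
    · obtain rfl : i = 2 := by lia
      simp
    · convert hF.apply_const_apply one_le_two x using 2 <;> ext j <;> fin_cases j <;> rfl

end Ternary

section Means

variable {R : Type*} [CommRing R] {z : R}

/-- The unnormalized weighted mean `∑ z ^ (n - i) * (1 - z) ^ (i - 1) * x_i` (with `i` running
from `1` to `n`), so that `M_n^z` is `(Δ_n^z)⁻¹ * weightedSum n z`. -/
def weightedSum (n : ℕ) (z : R) (x : Fin n → R) : R :=
  ∑ i : Fin n, z ^ (n - 1 - (i : ℕ)) * (1 - z) ^ (i : ℕ) * x i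

theorem Mz_eq_inverse_mul_weightedSum (n : ℕ) (z : R) (x : Fin n → R) :
    Mz n z x = Ring.inverse (Delta n z) * weightedSum n z x :=
  rfl

theorem weightedSum_const (n : ℕ) (z t : R) : weightedSum n z (fun _ => t) = Delta n z * t := by
  rw [weightedSum, Delta, ← Finset.sum_mul,
    Fin.sum_univ_eq_sum_range (fun i => z ^ (n - 1 - i) * (1 - z) ^ i)]

theorem weightedSum_append {a b : ℕ} (x : Fin a → R) (y : Fin b → R) :
    weightedSum (a + b) z (Fin.append x y) =
      z ^ b * weightedSum a z x + (1 - z) ^ a * weightedSum b z y := by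
  simp only [weightedSum, Fin.sum_univ_add, Fin.append_left, Fin.append_right, Finset.mul_sum,
    Fin.val_castAdd, Fin.val_natAdd]
  congr 1 <;> refine Finset.sum_congr rfl fun i _ => ?_
  · rw [show a + b - 1 - (i : ℕ) = b + (a - 1 - i) by lia]
    ring
  · rw [show a + b - 1 - (a + (i : ℕ)) = b - 1 - i by lia]
    ring

theorem Mz_append_const_Mz {a k b : ℕ} (hk : IsUnit (Delta k z)) (x : Fin a → R) (y : Fin k → R)
    (t : Fin b → R) :
    Mz (a + k + b) z (Fin.append (Fin.append x fun _ => Mz k z y) t) =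
      Mz (a + k + b) z (Fin.append (Fin.append x y) t) := by
  simp only [Mz_eq_inverse_mul_weightedSum, weightedSum_append, weightedSum_const,
    Ring.mul_inverse_cancel_left _ _ hk]

end Means

section Geometric

variable {R M : Type*} [CommSemiring R] [AddCommMonoid M] [Module R M] {m : ℕ}
  {e : Fin (m + 1) → M} {z w : R}

theorem pow_smul_eq_pow_smul (he : ∀ i : Fin m, z • e i.succ = w • e i.castSucc)
    {i j : Fin (m + 1)} (hij : i ≤ j) : z ^ (j - i : ℕ) • e j = w ^ (j - i : ℕ) • e i := by
  induction j using Fin.induction with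
  | zero => rw [Fin.le_zero_iff.mp hij]; simp
  | succ j ih =>
    obtain rfl | hlt := hij.eq_or_lt
    · simp
    have hle : i ≤ j.castSucc := Fin.le_castSucc_iff.mpr hlt
    have hsub : (j.succ - i : ℕ) = (j.castSucc - i : ℕ) + 1 := Nat.sub_add_comm hle
    rw [hsub, pow_succ, mul_smul, he, smul_comm, ih hle, smul_smul, ← pow_succ']

theorem pow_mul_pow_smul_comm (he : ∀ i : Fin m, z • e i.succ = w • e i.castSucc)
    (i j : Fin (m + 1)) :
    (z ^ (m - i : ℕ) * w ^ (i : ℕ)) • e j = (z ^ (m - j : ℕ) * w ^ (j : ℕ)) • e i := by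
  wlog hij : i ≤ j generalizing i j
  · exact (this j i (le_of_not_ge hij)).symm
  have hij' : (i : ℕ) ≤ j := hij
  have hz : z ^ (m - i : ℕ) = z ^ (m - j : ℕ) * z ^ (j - i : ℕ) := by
    rw [← pow_add]
    congr 1
    lia
  have hw : w ^ (j : ℕ) = w ^ (i : ℕ) * w ^ (j - i : ℕ) := by
    rw [← pow_add, Nat.add_sub_cancel' hij']
  rw [hz, hw, mul_right_comm, mul_smul, pow_smul_eq_pow_smul he hij, smul_smul, mul_assoc]

theorem pow_mul_pow_smul_sum_choose_smul (hzw : z + w = 1)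
    (he : ∀ i : Fin m, z • e i.succ = w • e i.castSucc) (i : Fin (m + 1)) :
    (z ^ (m - i : ℕ) * w ^ (i : ℕ)) • ∑ j : Fin (m + 1), m.choose j • e j = e i := by
  have hbinom : ∑ j : Fin (m + 1), m.choose j • (z ^ (m - j : ℕ) * w ^ (j : ℕ)) = 1 := by
    rw [Fin.sum_univ_eq_sum_range (fun j => m.choose j • (z ^ (m - j) * w ^ j))]
    have hpow := add_pow w z m
    rw [add_comm w z, hzw, one_pow] at hpow
    rw [hpow]
    exact Finset.sum_congr rfl fun j _ => by rw [nsmul_eq_mul]; ring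
  rw [Finset.smul_sum]
  simp only [smul_comm _ (Nat.choose _ _), pow_mul_pow_smul_comm he i]
  simp only [← smul_assoc, ← Finset.sum_smul, hbinom, one_smul]

end Geometric

section Invariance

variable {R M X : Type*} [CommRing R] [AddCommGroup M] [Module R M]

variable (R) in
/-- The directions along which the function `G` is invariant. -/
def invariantDirections (G : M → X) : Submodule R M where
  carrier := {d | ∀ v (s : R), G (v + s • d) = G v}
  zero_mem' v s := by rw [smul_zero, add_zero]
  add_mem' hd hd' v s := by rw [smul_add, ← add_assoc, hd', hd]
  smul_mem' c d hd v s := by rw [smul_smul, hd]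

theorem mem_invariantDirections {G : M → X} {d : M} :
    d ∈ invariantDirections R G ↔ ∀ v (s : R), G (v + s • d) = G v :=
  Iff.rfl

theorem apply_eq_of_sub_mem_invariantDirections {G : M → X} {v v' : M}
    (h : v - v' ∈ invariantDirections R G) : G v = G v' := by
  simpa using mem_invariantDirections.mp h v' 1

end Invariance

section Linear

variable {R X : Type*} [CommRing R] {F : ∀ n : ℕ, (Fin n → R) → R} {z : R} {m : ℕ}

theorem apply_eq_apply_weightedSum_smul {G : (Fin (m + 1) → R) → X}
    (hG : ∀ i : Fin m, z • Pi.single i.succ 1 - (1 - z) • Pi.single i.castSucc 1 ∈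
      invariantDirections R G) (x : Fin (m + 1) → R) :
    G x = G (weightedSum (m + 1) z x • fun i : Fin (m + 1) => (m.choose i : R)) := by
  set N := invariantDirections R G
  let e : Fin (m + 1) → ((Fin (m + 1) → R) ⧸ N) := fun i => N.mkQ (Pi.single i 1)
  have he : ∀ i : Fin m, z • e i.succ = (1 - z) • e i.castSucc := fun i => by
    rw [← map_smul, ← map_smul]
    exact (Submodule.Quotient.eq N).mpr (hG i)
  have hsum : ∀ v : Fin (m + 1) → R, N.mkQ v = ∑ i, v i • e i := fun v => by
    simp_rw [e, ← map_smul, ← map_sum]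
    congr 1
    exact pi_eq_sum_univ' v
  have hmkQ : N.mkQ x =
      N.mkQ (weightedSum (m + 1) z x • fun i : Fin (m + 1) => (m.choose i : R)) := by
    rw [map_smul, hsum, hsum, weightedSum, Finset.sum_smul]
    refine Finset.sum_congr rfl fun i _ => ?_
    simp_rw [Nat.cast_smul_eq_nsmul]
    rw [mul_comm, mul_smul, Nat.add_sub_cancel,
      pow_mul_pow_smul_sum_choose_smul (add_sub_cancel z 1) he i]
  exact apply_eq_of_sub_mem_invariantDirections (R := R) ((Submodule.Quotient.eq N).mp hmkQ)

theorem BAssoc.smul_single_sub_mem_invariantDirections (hF : BAssoc F)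
    (hF2 : ∀ x, F 2 x = z * x 0 + (1 - z) * x 1) (i : Fin m) :
    z • Pi.single i.succ 1 - (1 - z) • Pi.single i.castSucc 1 ∈
      invariantDirections R (F (m + 1)) := by
  refine fun v s => hF.apply_congr (a := i) (k := 2) (by lia) one_le_two (fun j hj => ?_) ?_
  · have hs : j ≠ i.succ := by rintro rfl; simp at hj
    have hc : j ≠ i.castSucc := by rintro rfl; simp at hj
    simp [hs, hc]
  · have hc (h) : (⟨i + (0 : Fin 2), h⟩ : Fin (m + 1)) = i.castSucc := rfl
    have hs (h) : (⟨i + (1 : Fin 2), h⟩ : Fin (m + 1)) = i.succ := rfl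
    have hne : i.succ ≠ i.castSucc := Fin.castSucc_lt_succ.ne'
    simp only [hF2, hc, hs, Pi.add_apply, Pi.sub_apply, Pi.smul_apply, smul_eq_mul,
      Pi.single_eq_same, Pi.single_eq_of_ne hne, Pi.single_eq_of_ne hne.symm]
    ring

variable [IsDomain R] [Infinite R]

theorem isUnit_and_eval_eq_of_eval_mul_eq {h : Polynomial R} {δ : R}
    (hh : ∀ t, h.eval (δ * t) = t) : IsUnit δ ∧ ∀ s, h.eval s = Ring.inverse δ * s := by
  have hcomp : h.comp (Polynomial.C δ * Polynomial.X) = Polynomial.X :=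
    Polynomial.funext fun t => by simp [hh]
  have hunit : IsUnit δ := by
    refine IsUnit.of_mul_eq_one_right (h.coeff 1) ?_
    rw [← pow_one δ, ← Polynomial.comp_C_mul_X_coeff, hcomp, Polynomial.coeff_X_one]
  refine ⟨hunit, fun s => ?_⟩
  conv_lhs => rw [← Ring.mul_inverse_cancel_left δ s hunit]
  exact hh _

theorem BAssoc.isUnit_Delta_and_eq_Mz (hF : BAssoc F) {n : ℕ} (hn : 1 ≤ n)
    {p : MvPolynomial (Fin n) R} (hp : ∀ x, F n x = eval x p) (hconst : ¬IsConstant (F n))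
    (hF2 : ¬IsConstant (F 2) → ∀ x, F 2 x = z * x 0 + (1 - z) * x 1) :
    IsUnit (Delta n z) ∧ F n = Mz n z := by
  obtain ⟨m, rfl⟩ := Nat.exists_eq_add_of_le' hn
  have hinv : ∀ x, F (m + 1) x =
      F (m + 1) (weightedSum (m + 1) z x • fun i : Fin (m + 1) => (m.choose i : R)) :=
    apply_eq_apply_weightedSum_smul fun i =>
      hF.smul_single_sub_mem_invariantDirections (hF2 fun hconst2 =>
        hconst (hF.isConstant_of_le one_le_two (Nat.succ_le_succ i.pos) hconst2)) i
  let h : Polynomial R :=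
    aeval (fun i : Fin (m + 1) => Polynomial.X * Polynomial.C (m.choose i : R)) p
  have hh : ∀ x, h.eval (weightedSum (m + 1) z x) = F (m + 1) x := fun x => by
    rw [hinv, hp, ← Polynomial.coe_aeval_eq_eval, comp_aeval_apply, aeval_eq_eval]
    congr 2 with i
    simp
  obtain ⟨hunit, hinverse⟩ := isUnit_and_eval_eq_of_eval_mul_eq (h := h) (δ := Delta (m + 1) z)
    fun t => by
      rw [← weightedSum_const, hh, hp, ← eval_diag, hF.diag_eq_X hn hp hconst, Polynomial.eval_X]
  exact ⟨hunit, _root_.funext fun x => by rw [← hh, hinverse, Mz_eq_inverse_mul_weightedSum]⟩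

end Linear

section Truncation

/-- The least `n ≥ 1` satisfying `P`, or `∞` if there is none. -/
noncomputable def firstIndex (P : ℕ → Prop) : ℕ∞ :=
  sInf {c | ∃ m : ℕ, c = (m : ℕ∞) ∧ 1 ≤ m ∧ P m}

theorem nz_eq_firstIndex {R : Type*} [CommRing R] (z : R) :
    nz z = firstIndex fun n => ¬IsUnit (Delta n z) :=
  rfl

theorem firstIndex_le {P : ℕ → Prop} {n : ℕ} (hn : 1 ≤ n) (h : P n) : firstIndex P ≤ n :=
  sInf_le ⟨n, rfl, hn, h⟩

theorem le_firstIndex_iff {P : ℕ → Prop} {k : ℕ∞} :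
    k ≤ firstIndex P ↔ ∀ n : ℕ, 1 ≤ n → P n → k ≤ n := by
  refine le_sInf_iff.trans ⟨fun h n hn hP => h n ⟨n, rfl, hn, hP⟩, ?_⟩
  rintro h _ ⟨n, rfl, hn, hP⟩
  exact h n hn hP

theorem of_firstIndex_le {P : ℕ → Prop} (hP : ∀ m n, 1 ≤ m → m ≤ n → P m → P n) {n : ℕ}
    (h : firstIndex P ≤ n) : P n := by
  by_contra hn
  have hlt : ((n + 1 : ℕ) : ℕ∞) ≤ firstIndex P := le_firstIndex_iff.mpr fun m hm hPm => by
    by_contra! hmn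
    exact hn (hP m n hm (Nat.lt_succ_iff.mp (Nat.cast_lt.mp hmn)) hPm)
  exact absurd (Nat.cast_le.mp (hlt.trans h)) (Nat.not_succ_le_self n)

/-- `F` belongs to the class `[G]_k`: it agrees with `G` in arities below `k` and is constant in
the other ones. -/
def IsTruncation {X : Type*} (G : ∀ n : ℕ, (Fin n → X) → X) (k : ℕ∞)
    (F : ∀ n : ℕ, (Fin n → X) → X) : Prop :=
  (∀ n : ℕ, 1 ≤ n → (n : ℕ∞) < k → F n = G n) ∧ ∀ n : ℕ, 1 ≤ n → k ≤ n → IsConstant (F n)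

theorem IsTruncation.bAssoc {R : Type*} [CommRing R] {F : ∀ n : ℕ, (Fin n → R) → R} {z : R}
    {k : ℕ∞} (hF : IsTruncation (fun n => Mz n z) k F) (hk : k ≤ nz z) : BAssoc F := by
  rw [nz_eq_firstIndex] at hk
  intro a b m hm x y t
  obtain hlt | hle := lt_or_ge ((a + m + b : ℕ) : ℕ∞) k
  · have hmk : (m : ℕ∞) < k := lt_of_le_of_lt (Nat.cast_le.mpr (by lia)) hlt
    have hunit : IsUnit (Delta m z) := by
      by_contra h
      exact hmk.not_ge (le_firstIndex_iff.mp hk m hm h)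
    rw [hF.1 _ (by lia) hlt, hF.1 m hm hmk]
    exact (Mz_append_const_Mz hunit x y t).symm
  · exact (hF.2 _ (by lia) hle).apply_eq _ _

theorem bAssoc_of_isConstant_of_three_le {X : Type*} {F : ∀ n : ℕ, (Fin n → X) → X}
    (h1 : ∀ x, F 1 x = x 0) (h2 : ∀ x, F 2 (fun _ => F 2 x) = F 2 x)
    (h3 : ∀ n, 3 ≤ n → IsConstant (F n)) : BAssoc F := by
  intro a b k hk x y z
  obtain hn | hn := le_or_gt 3 (a + k + b)
  · exact (h3 _ hn).apply_eq _ _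
  obtain rfl | rfl : k = 1 ∨ k = 2 := by lia
  · have hy : (fun _ => F 1 y) = y := by
      ext i
      rw [h1, Subsingleton.elim i 0]
    rw [hy]
  · obtain ⟨rfl, rfl⟩ : a = 0 ∧ b = 0 := by lia
    have happend : ∀ w : Fin 2 → X, Fin.append (Fin.append x w) z = w := fun w => by
      ext i
      fin_cases i <;> rfl
    rw [happend, happend]
    exact (h2 y).symm

end Truncation

section Characterization

variable {R : Type*} [CommRing R] [IsDomain R] [Infinite R] {F : ∀ n : ℕ, (Fin n → R) → R}

theorem BAssoc.exists_isTruncation (hF : BAssoc F)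
    (hpoly : ∀ n, 1 ≤ n → ∃ p : MvPolynomial (Fin n) R, ∀ x, F n x = eval x p) {z : R}
    (hF2 : ¬IsConstant (F 2) → ∀ x, F 2 x = z * x 0 + (1 - z) * x 1) :
    ∃ k : ℕ∞, 1 ≤ k ∧ k ≤ nz z ∧ IsTruncation (fun n => Mz n z) k F := by
  have hmean : ∀ n, 1 ≤ n → ¬IsConstant (F n) → IsUnit (Delta n z) ∧ F n = Mz n z :=
    fun n hn hconst => by
      obtain ⟨p, hp⟩ := hpoly n hn
      exact hF.isUnit_Delta_and_eq_Mz hn hp hconst hF2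
  refine ⟨firstIndex fun n => IsConstant (F n), ?_, ?_, fun n hn hlt => ?_, fun n _ hle => ?_⟩
  · exact le_firstIndex_iff.mpr fun n hn _ => Nat.one_le_cast.mpr hn
  · rw [nz_eq_firstIndex]
    refine le_firstIndex_iff.mpr fun n hn hnonunit => firstIndex_le hn ?_
    by_contra hconst
    exact hnonunit (hmean n hn hconst).1
  · exact (hmean n hn fun hconst => hlt.not_ge (firstIndex_le hn hconst)).2
  · exact of_firstIndex_le (P := fun n => IsConstant (F n))
      (fun _ _ hm hmn => hF.isConstant_of_le hm hmn) hle

theorem BAssoc.exists_apply_two_eq (hF : BAssoc F) {f : MvPolynomial (Fin 2) R}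
    (hf : ∀ x, F 2 x = eval x f) {g : MvPolynomial (Fin 3) R} (hg : ∀ x, F 3 x = eval x g)
    (hconst : ¬IsConstant (F 2)) :
    ∃ q : MvPolynomial (Fin 2) R,
      (∀ x, F 2 x = eval x q * x 0 + (1 - eval x q) * x 1) ∧
        (1 ≤ q.totalDegree → IsConstant (F 3)) := by
  obtain ⟨q, rfl⟩ := exists_eq_X_one_add_mul_of_diag_eq_X (hF.diag_eq_X one_le_two hf hconst)
  refine ⟨q, fun x => ?_, fun hq => ?_⟩
  · simp only [hf, map_add, map_sub, map_mul, eval_X]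
    ring
  · by_contra hconst3
    have hq0 := totalDegree_eq_zero_of_totalDegree_X_one_add_mul_le_one
      (hF.totalDegree_le_one_of_not_isConstant_three hf hg hconst3)
    lia

end Characterization

/-- Main Theorem: a `*`-ary polynomial function `F` over an infinite commutative integral
domain `R` is B-associative if and only if (i) there are `z ∈ R` and `k` (an integer
`k ≥ 1` or `k = ∞`) with `k ≤ n(z)` such that `F ∈ [M^z]_k`, i.e. `F_n = M_n^z` for
every `n < k` and `F_n` is constant for every `n ≥ k`; or (ii) there is a polynomial
function `Q : R² → R` of degree `≥ 1` such that `F_1(x) = x`,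
`F_2(x,y) = Q(x,y)·x + (1 - Q(x,y))·y`, and `F_n` is constant for every `n ≥ 3`. -/
theorem bassoc_polynomial_characterization
    {R : Type*} [CommRing R] [IsDomain R] [Infinite R]
    (F : ∀ n : ℕ, (Fin n → R) → R)
    (hpoly : ∀ n : ℕ, 1 ≤ n →
      ∃ p : MvPolynomial (Fin n) R, ∀ x : Fin n → R, F n x = MvPolynomial.eval x p) :
    BAssoc F ↔
      ((∃ z : R, ∃ k : ℕ∞, 1 ≤ k ∧ k ≤ nz z ∧
          (∀ n : ℕ, 1 ≤ n → (n : ℕ∞) < k → F n = Mz n z) ∧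
          (∀ n : ℕ, 1 ≤ n → k ≤ (n : ℕ∞) → ∃ c : R, ∀ x : Fin n → R, F n x = c)) ∨
        (∃ Q : MvPolynomial (Fin 2) R, 1 ≤ Q.totalDegree ∧
          (∀ x : Fin 1 → R, F 1 x = x 0) ∧
          (∀ x : Fin 2 → R, F 2 x =
            MvPolynomial.eval x Q * x 0 + (1 - MvPolynomial.eval x Q) * x 1) ∧
          (∀ n : ℕ, 3 ≤ n → ∃ c : R, ∀ x : Fin n → R, F n x = c))) := by
  constructor
  · intro hF
    obtain ⟨p, hp⟩ := hpoly 1 le_rfl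
    obtain ⟨f, hf⟩ := hpoly 2 one_le_two
    obtain ⟨g, hg⟩ := hpoly 3 (by lia)
    by_cases hconst : IsConstant (F 2)
    · exact Or.inl ⟨0, hF.exists_isTruncation hpoly (absurd hconst)⟩
    obtain ⟨Q, hQ, hconst3⟩ := hF.exists_apply_two_eq hf hg hconst
    obtain hQ0 | hQ1 := Nat.eq_zero_or_pos Q.totalDegree
    · refine Or.inl ⟨Q.coeff 0, hF.exists_isTruncation hpoly fun _ x => ?_⟩
      rw [hQ, totalDegree_eq_zero_iff_eq_C.mp hQ0, eval_C, coeff_zero_C]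
    · have hconst1 : ¬IsConstant (F 1) := fun h => hconst (hF.isConstant_succ le_rfl h)
      exact Or.inr ⟨Q, hQ1, hF.apply_one_of_not_isConstant hp hconst1, hQ,
        fun n hn => hF.isConstant_of_le (by lia) hn (hconst3 hQ1)⟩
  · rintro (⟨z, k, -, hk, hF⟩ | ⟨Q, -, h1, h2, h3⟩)
    · exact IsTruncation.bAssoc hF hk
    · refine bAssoc_of_isConstant_of_three_le h1 (fun x => ?_) h3
      rw [h2 fun _ => F 2 x]
      ring
end

section
/- Let F be a barycentrically associative *-ary function on a nonempty set X. If the n-ary part F_n is a constant function for some n ≥ 1, then F_{n+1} is also a constant function. -/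
theorem apply_comp_cast {X Y : Sort*} (F : ∀ n : ℕ, (Fin n → X) → Y) {m n : ℕ} (h : m = n)
    (x : Fin n → X) : F m (x ∘ Fin.cast h) = F n x := by
  subst h
  rfl

namespace BAssoc

variable {X : Type*} {F : ∀ n : ℕ, (Fin n → X) → X} {n : ℕ}

theorem apply_cons (hF : BAssoc F) (hn : 1 ≤ n) (a : X) (y : Fin n → X) :
    F (n + 1) (Fin.cons a y) = F (n + 1) (Fin.cons a fun _ => F n y) := by
  simpa only [Fin.append_elim0, Fin.append_left_eq_cons, apply_comp_cast] using
    hF 1 0 n hn (fun _ => a) y Fin.elim0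

theorem apply_snoc (hF : BAssoc F) (hn : 1 ≤ n) (y : Fin n → X) (b : X) :
    F (n + 1) (Fin.snoc y b) = F (n + 1) (Fin.snoc (fun _ => F n y) b) := by
  have h := hF 0 1 n hn Fin.elim0 y (fun _ => b)
  -- Reassociating first moves the empty prefix outside, so that its cast acts on the whole tuple.
  simp only [Fin.append_assoc, apply_comp_cast] at h
  simpa only [Fin.elim0_append, Fin.append_right_eq_snoc, apply_comp_cast] using h

end BAssoc

/-- Fact 1 (i): if `F` is B-associative and `F_n` is constant for some `n ≥ 1`,
then `F_{n+1}` is also constant. -/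
theorem bassoc_constant_succ {X : Type*} [Nonempty X]
    (F : ∀ n : ℕ, (Fin n → X) → X) (hF : BAssoc F)
    (n : ℕ) (hn : 1 ≤ n) (c : X) (hc : ∀ x : Fin n → X, F n x = c) :
    ∃ c' : X, ∀ x : Fin (n + 1) → X, F (n + 1) x = c' := by
  refine ⟨F (n + 1) (Fin.snoc (fun _ => c) c), fun x => ?_⟩
  let w : Fin (n + 1) → X := Fin.cons (x 0) fun _ => c
  have w_last : w (Fin.last n) = c := by
    obtain ⟨k, rfl⟩ := Nat.exists_eq_add_of_le' hn
    rfl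
  calc
    F (n + 1) x = F (n + 1) (Fin.cons (x 0) (Fin.tail x)) := by rw [Fin.cons_self_tail]
    _ = F (n + 1) w := by rw [hF.apply_cons hn, hc]
    _ = F (n + 1) (Fin.snoc (Fin.init w) c) := by rw [← w_last, Fin.snoc_init_self]
    _ = F (n + 1) (Fin.snoc (fun _ => c) c) := by rw [hF.apply_snoc hn, hc]
end

section
/- Let R be an infinite commutative integral domain and let F : R^n → R be a polynomial function. Then F is range-idempotent (i.e., F(n·x) = x for every x in the range of F) if and only if F is either a constant function or idempotent (i.e., F(n·x) = x for every x ∈ R). -/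
/-!
The diagonal section `x ↦ F (x, …, x)` of a polynomial function is given by a univariate
polynomial `d`, and range-idempotence says that `d` and `X` agree on the range of `F`. If the range
is infinite, then `d = X`, so `F` is idempotent. If the range is a finite set `S`, then the product
of the polynomials `F - a` over `a ∈ S` vanishes identically; over an infinite domain one of its
factors must be zero, so `F` is constant.
-/

section DiagonalSection

variable {R σ : Type*} [CommSemiring R]

/-- The diagonal section of a multivariate polynomial: the univariate polynomial obtained by
replacing every variable by `X`. It represents `x ↦ F (n·x)` when `p` represents `F`. -/
noncomputable def diagonalSection (p : MvPolynomial σ R) : Polynomial R :=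
  MvPolynomial.aeval (fun _ => Polynomial.X) p

theorem eval_diagonalSection (x : R) (p : MvPolynomial σ R) :
    (diagonalSection p).eval x = MvPolynomial.eval (fun _ => x) p := by
  simpa only [diagonalSection, Polynomial.coe_aeval_eq_eval, Polynomial.eval_X,
    MvPolynomial.aeval_eq_eval] using
    MvPolynomial.comp_aeval_apply (fun _ : σ => Polynomial.X) (Polynomial.aeval x) p

end DiagonalSection

section InfiniteDomain

variable {R σ : Type*} [CommRing R] [IsDomain R] [Infinite R]

theorem mem_of_forall_exists_eval_eq {p : MvPolynomial σ R} {s : Finset (MvPolynomial σ R)}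
    (h : ∀ x, ∃ q ∈ s, MvPolynomial.eval x p = MvPolynomial.eval x q) : p ∈ s := by
  have prod_eq_zero : ∏ q ∈ s, (p - q) = 0 := by
    refine MvPolynomial.funext fun x => ?_
    obtain ⟨q, hq, hpq⟩ := h x
    rw [map_prod, map_zero]
    exact Finset.prod_eq_zero hq (by rw [map_sub, hpq, sub_self])
  obtain ⟨q, hq, hpq⟩ := Finset.prod_eq_zero_iff.mp prod_eq_zero
  rwa [sub_eq_zero.mp hpq]

theorem exists_eq_C_of_finite_range_eval {p : MvPolynomial σ R}
    (hp : (Set.range fun x => MvPolynomial.eval x p).Finite) : ∃ c, p = MvPolynomial.C c := by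
  classical
  have hmem : p ∈ hp.toFinset.image MvPolynomial.C :=
    mem_of_forall_exists_eval_eq fun x =>
      ⟨MvPolynomial.C (MvPolynomial.eval x p),
        Finset.mem_image_of_mem _ (hp.mem_toFinset.mpr ⟨x, rfl⟩), (MvPolynomial.eval_C _).symm⟩
  obtain ⟨c, -, hc⟩ := Finset.mem_image.mp hmem
  exact ⟨c, hc.symm⟩

theorem rangeIdempotent_iff_constant_or_idempotent_general (F : (σ → R) → R)
    (hF : ∃ p : MvPolynomial σ R, ∀ x : σ → R, F x = MvPolynomial.eval x p) :
    (∀ x ∈ Set.range F, F (fun _ => x) = x) ↔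
      ((∃ c : R, ∀ x : σ → R, F x = c) ∨ (∀ x : R, F (fun _ => x) = x)) := by
  obtain ⟨p, hp⟩ := hF
  obtain rfl : F = fun x => MvPolynomial.eval x p := funext hp
  simp only [← eval_diagonalSection]
  constructor
  · intro range_idempotent
    rcases (Set.range fun x => MvPolynomial.eval x p).finite_or_infinite with hfin | hinf
    · obtain ⟨c, rfl⟩ := exists_eq_C_of_finite_range_eval hfin
      exact .inl ⟨c, fun x => MvPolynomial.eval_C c⟩
    · have diagonal_eq_X : diagonalSection p = Polynomial.X :=
        Polynomial.eq_of_infinite_eval_eq _ _ <| hinf.mono fun x hx =>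
          (range_idempotent x hx).trans Polynomial.eval_X.symm
      exact .inr fun x => by rw [diagonal_eq_X, Polynomial.eval_X]
  · rintro (⟨c, hc⟩ | idempotent)
    · rintro _ ⟨x, rfl⟩
      exact (eval_diagonalSection _ p).trans ((hc _).trans (hc x).symm)
    · exact fun x _ => idempotent x

end InfiniteDomain

/-- Lemma: over an infinite commutative integral domain `R`, a polynomial function
`F : R^n → R` is range-idempotent (i.e. `F (n·x) = x` for every `x` in the range of `F`)
if and only if it is either constant or idempotent (i.e. `F (n·x) = x` for every `x ∈ R`). -/
theorem rangeIdempotent_iff_constant_or_idempotent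
    {R : Type*} [CommRing R] [IsDomain R] [Infinite R] {n : ℕ}
    (F : (Fin n → R) → R)
    (hF : ∃ p : MvPolynomial (Fin n) R, ∀ x : Fin n → R, F x = MvPolynomial.eval x p) :
    (∀ x ∈ Set.range F, F (fun _ : Fin n => x) = x) ↔
      ((∃ c : R, ∀ x : Fin n → R, F x = c) ∨ (∀ x : R, F (fun _ : Fin n => x) = x)) :=
  rangeIdempotent_iff_constant_or_idempotent_general F hF
end

section
/- Let F be a barycentrically associative *-ary polynomial function on an infinite field R. If F_3 is nonconstant, then F_2 is a polynomial function of degree 1. -/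
/-!
Write `f = F₂`, `G(s, z) = F₃(s, s, z)` and `H(x, t) = F₃(x, t, t)`. Being idempotent and
nonconstant, `F₂` and `F₃` fix the diagonal, and B-associativity says
`F₃(x, y, z) = G(f(x, y), z) = H(x, f(y, z))`. Let `p` and `q` be the degrees of `f` in its first
and second argument; if `f` or `H` does not depend on its second argument, or `f` or `G` on its
first, then `f` is a projection.

Otherwise, with `e` the degree of `H` in `t`, comparing coefficients of `z ^ (e * q)` gives
`h(f(x, y)) = H_e(x) φ(y) ^ e`, where `φ` is the leading coefficient of `f` in its second argument.
The degrees in `x`, in `y` and on the diagonal `x = y` show that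
`deg h = deg H_e + e * deg φ = (p + q) * deg h`. Hence `deg h = 0` and `φ` is constant; by symmetry
so is the leading coefficient of `f` in its first argument.

Finally `f(x, y) = H(x, f(y, f(x, y)))`, so for suitable `x` the polynomial `f(y, f(x, y))` in `y`
has degree at most `q`. If `p ≤ q` and `2 ≤ q`, its degree is `q ^ 2`, so `q = 1` and `f` is affine.
The case `q ≤ p` is symmetric.
-/

open Polynomial Polynomial.Bivariate

section Univariate

variable {R : Type*}

theorem eq_X_or_eq_C_of_comp_self [CommRing R] [IsDomain R] {q : R[X]} (h : q.comp q = q) :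
    q = X ∨ q = C (q.coeff 0) := by
  have hcomp : (q - X).comp q = 0 := by rw [sub_comp, X_comp, h, sub_self]
  rcases comp_eq_zero_iff.1 hcomp with hX | ⟨-, hC⟩
  exacts [Or.inl (sub_eq_zero.1 hX), Or.inr hC]

theorem exists_eval_ne_zero [CommRing R] [IsDomain R] [Infinite R] {p : R[X]} (hp : p ≠ 0) :
    ∃ x, p.eval x ≠ 0 := by
  by_contra! h
  exact hp (Polynomial.funext fun x => by rw [h, eval_zero])

theorem coeff_eval_of_natDegree_lt [Semiring R] {f : R[X][Y]} {u : R[X]} {n N : ℕ}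
    (hf : f.natDegree ≤ n) (hlt : ∀ j < n, (f.coeff j * u ^ j).natDegree < N) :
    (f.eval u).coeff N = (f.coeff n * u ^ n).coeff N := by
  rw [eval_eq_sum_range' (Nat.lt_succ_of_le hf), finsetSum_coeff, Finset.sum_range_succ,
    Finset.sum_eq_zero, zero_add]
  exact fun j hj => coeff_eq_zero_of_natDegree_lt (hlt j (Finset.mem_range.1 hj))

theorem coeff_comp_of_natDegree_le [Semiring R] {p q : R[X]} {m n : ℕ} (hn : n ≠ 0)
    (hp : p.natDegree ≤ m) (hq : q.natDegree ≤ n) :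
    (p.comp q).coeff (m * n) = p.coeff m * q.coeff n ^ m := by
  rw [comp, eval₂_eq_eval_map,
    coeff_eval_of_natDegree_lt (natDegree_map_le.trans hp), coeff_map, coeff_C_mul,
    coeff_pow_of_natDegree_le hq]
  intro j hj
  rw [coeff_map]
  calc (C (p.coeff j) * q ^ j).natDegree ≤ j * n :=
        (natDegree_C_mul_le _ _).trans (natDegree_pow_le_of_le j hq)
    _ < m * n := Nat.mul_lt_mul_of_pos_right hj (Nat.pos_of_ne_zero hn)

end Univariate

section Bivariate

section CommSemiring

variable {R : Type*} [CommSemiring R]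

theorem evalEval_swap (x y : R) (f : R[X][Y]) : (swap f).evalEval x y = f.evalEval y x := by
  rw [← coe_aevalAeval_eq_evalEval, ← coe_aevalAeval_eq_evalEval, aevalAeval_swap]

theorem eval_polynomial_eval (y : R) (u : R[X]) (f : R[X][Y]) :
    (f.eval u).eval y = f.evalEval y (u.eval y) := by
  rw [← map_evalRingHom_eval, eval_map, ← coe_evalRingHom, eval₂_at_apply]

theorem evalEval_aeval {σ : Type*} (v : σ → R[X][Y]) (p : MvPolynomial σ R) (x y : R) :
    (MvPolynomial.aeval v p).evalEval x y =
      MvPolynomial.eval (fun i => (v i).evalEval x y) p := by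
  simpa only [coe_aevalAeval_eq_evalEval, MvPolynomial.aeval_eq_eval, AlgHom.coe_coe]
    using MvPolynomial.comp_aeval_apply v (aevalAeval x y) p

theorem evalEval_eq_of_natDegree_eq_zero {f : R[X][Y]} (hf : f.natDegree = 0) (x y z : R) :
    f.evalEval x y = f.evalEval x z := by
  rw [eq_C_of_natDegree_eq_zero hf, evalEval_C, evalEval_C]

theorem coeff_coeff_swap (f : R[X][Y]) (i j : ℕ) :
    ((swap f).coeff i).coeff j = (f.coeff j).coeff i := by
  induction f using Polynomial.induction_on' with
  | add f g hf hg => simp only [map_add, coeff_add, hf, hg]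
  | monomial n a =>
    induction a using Polynomial.induction_on' with
    | add a b ha hb => simp only [map_add, coeff_add, ha, hb]
    | monomial m r =>
      rw [swap_monomial_monomial]
      simp only [coeff_monomial]
      split_ifs <;> simp_all [coeff_monomial]

theorem natDegree_coeff_le_natDegree_swap (f : R[X][Y]) (j : ℕ) :
    (f.coeff j).natDegree ≤ (swap f).natDegree := by
  refine natDegree_le_iff_coeff_eq_zero.2 fun i hi => ?_
  rw [← coeff_coeff_swap, coeff_eq_zero_of_natDegree_lt hi, coeff_zero]

theorem natDegree_coeff_le_natDegree_swap_sub_one {f : R[X][Y]}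
    (hlc : (swap f).leadingCoeff.natDegree = 0) {j : ℕ} (hj : j ≠ 0) :
    (f.coeff j).natDegree ≤ (swap f).natDegree - 1 := by
  refine natDegree_le_iff_coeff_eq_zero.2 fun i hi => ?_
  rw [← coeff_coeff_swap]
  rcases (Nat.le_of_pred_lt hi).eq_or_lt with rfl | hlt
  · exact coeff_eq_zero_of_natDegree_lt (hlc.trans_lt (Nat.pos_of_ne_zero hj))
  · rw [coeff_eq_zero_of_natDegree_lt hlt, coeff_zero]

theorem mul_natDegree_le_natDegree_eval [NoZeroDivisors R] {f : R[X][Y]} {u : R[X]}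
    (hlc : f.leadingCoeff.natDegree = 0) (hlc' : (swap f).leadingCoeff.natDegree = 0)
    (hle : (swap f).natDegree ≤ f.natDegree) (hfu : f.natDegree ≤ u.natDegree)
    (hu : 2 ≤ u.natDegree) :
    f.natDegree * u.natDegree ≤ (f.eval u).natDegree := by
  rcases eq_or_ne f 0 with rfl | hf
  · simp only [natDegree_zero, zero_mul, zero_le]
  have hlt : ∀ j < f.natDegree, (f.coeff j * u ^ j).natDegree < f.natDegree * u.natDegree := by
    intro j hj
    have hterm : (f.coeff j * u ^ j).natDegree ≤ (f.coeff j).natDegree + j * u.natDegree :=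
      natDegree_mul_le_of_le le_rfl (natDegree_pow_le_of_le j le_rfl)
    rcases eq_or_ne j 0 with rfl | hj₀
    · have := natDegree_coeff_le_natDegree_swap f 0
      nlinarith
    · have hcoeff := natDegree_coeff_le_natDegree_swap_sub_one hlc' hj₀
      calc (f.coeff j * u ^ j).natDegree
          < u.natDegree + j * u.natDegree := by omega
        _ = (j + 1) * u.natDegree := by ring
        _ ≤ f.natDegree * u.natDegree := Nat.mul_le_mul_right _ hj
  have hu₀ : u ^ f.natDegree ≠ 0 := pow_ne_zero _ (ne_zero_of_natDegree_gt hu)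
  have hlead : (f.leadingCoeff * u ^ f.natDegree).natDegree = f.natDegree * u.natDegree := by
    rw [natDegree_mul (leadingCoeff_ne_zero.2 hf) hu₀, hlc, zero_add, natDegree_pow]
  apply le_natDegree_of_ne_zero
  rw [coeff_eval_of_natDegree_lt le_rfl hlt, coeff_natDegree, ← hlead, coeff_natDegree]
  exact leadingCoeff_ne_zero.2 (mul_ne_zero (leadingCoeff_ne_zero.2 hf) hu₀)

theorem exists_evalEval_eq_affine_of_natDegree_eq_one {f : R[X][Y]}
    (hdiag : ∀ t, f.evalEval t t = t) (hf : f.natDegree = 1) (hf' : (swap f).natDegree ≤ 1)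
    (hlc : f.leadingCoeff.natDegree = 0) :
    ∃ a b : R, a + b = 1 ∧ ∀ x y, f.evalEval x y = a * x + b * y := by
  obtain ⟨b, hb⟩ : ∃ b, f.coeff 1 = C b :=
    ⟨_, eq_C_of_natDegree_eq_zero (by rwa [← hf, coeff_natDegree])⟩
  obtain ⟨a, c, hac⟩ := exists_eq_X_add_C_of_natDegree_le_one
    ((natDegree_coeff_le_natDegree_swap f 0).trans hf')
  have heval : ∀ x y, f.evalEval x y = b * y + (a * x + c) := fun x y => by
    rw [eq_X_add_C_of_natDegree_le_one hf.le, hb, hac]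
    simp [evalEval]
  have hc : c = 0 := by simpa [heval] using hdiag 0
  refine ⟨a, b, ?_, fun x y => by rw [heval, hc]; ring⟩
  simpa [heval, hc, add_comm] using hdiag 1

end CommSemiring

section CommRing

variable {R : Type*} [CommRing R] [IsDomain R] [Infinite R]

theorem natDegree_mul_natDegree_eq_of_eval_evalEval_eq {f : R[X][Y]}
    {g a b : R[X]} (hf : f ≠ 0) (ha : a ≠ 0)
    (h : ∀ x y, g.eval (f.evalEval x y) = a.eval x * b.eval y) :
    g.natDegree * f.natDegree = b.natDegree := by
  obtain ⟨x, hx⟩ := exists_eval_ne_zero (mul_ne_zero ha (leadingCoeff_ne_zero.2 hf))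
  rw [eval_mul] at hx
  have hcomp : g.comp (f.map (evalRingHom x)) = C (a.eval x) * b := Polynomial.funext fun y => by
    simp only [eval_comp, map_evalRingHom_eval, h, eval_mul, eval_C]
  simpa only [natDegree_comp, natDegree_C_mul (left_ne_zero_of_mul hx),
    natDegree_map_of_leadingCoeff_ne_zero (evalRingHom x) (right_ne_zero_of_mul hx)]
    using congrArg natDegree hcomp

theorem natDegree_eq_zero_of_eval_evalEval_eq {f : R[X][Y]} {g a b : R[X]}
    (hdiag : ∀ t, f.evalEval t t = t) (hf : f.natDegree ≠ 0) (hf' : (swap f).natDegree ≠ 0)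
    (ha : a ≠ 0) (hb : b ≠ 0) (h : ∀ x y, g.eval (f.evalEval x y) = a.eval x * b.eval y) :
    b.natDegree = 0 := by
  have hdeg : g.natDegree = a.natDegree + b.natDegree := by
    rw [← natDegree_mul ha hb]
    congr 1
    exact Polynomial.funext fun t => by rw [eval_mul, ← h, hdiag]
  have hright :=
    natDegree_mul_natDegree_eq_of_eval_evalEval_eq (ne_zero_of_natDegree_gt hf.bot_lt) ha h
  have hleft :=
    natDegree_mul_natDegree_eq_of_eval_evalEval_eq (ne_zero_of_natDegree_gt hf'.bot_lt) hb
      (fun y x => by rw [evalEval_swap, h, mul_comm])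
  have hg : g.natDegree = 0 := by
    have := Nat.pos_of_ne_zero hf
    have := Nat.pos_of_ne_zero hf'
    nlinarith
  rw [← hright, hg, zero_mul]

end CommRing

end Bivariate

/-- The polynomials `f = F₂`, `G(s, z) = F₃(s, s, z)` and `H(x, t) = F₃(x, t, t)` attached to a
B-associative function `F` that fixes the diagonal, with the relations between them used here.
The second argument of each is the outer variable `Y`, so `natDegree` is the degree in it. -/
structure IsBarycentricTriple {R : Type*} [CommSemiring R] (f G H : R[X][Y]) : Prop where
  diag : ∀ t, f.evalEval t t = t
  diag_left : ∀ t, G.evalEval t t = t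
  assoc : ∀ x y z, G.evalEval (f.evalEval x y) z = H.evalEval x (f.evalEval y z)

namespace IsBarycentricTriple

section CommSemiring

variable {R : Type*} [CommSemiring R] {f G H : R[X][Y]}

theorem diag_right (h : IsBarycentricTriple f G H) (t : R) : H.evalEval t t = t := by
  simpa only [h.diag, h.diag_left] using (h.assoc t t t).symm

protected theorem swap (h : IsBarycentricTriple f G H) :
    IsBarycentricTriple (swap f) (swap H) (swap G) where
  diag t := by rw [evalEval_swap, h.diag]
  diag_left t := by rw [evalEval_swap, h.diag_right]
  assoc x y z := by simp only [evalEval_swap, h.assoc]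

theorem evalEval_right_absorb (h : IsBarycentricTriple f G H) (x y : R) :
    H.evalEval x (f.evalEval y (f.evalEval x y)) = f.evalEval x y := by
  rw [← h.assoc, h.diag_left]

theorem evalEval_eq_left (h : IsBarycentricTriple f G H)
    (hdeg : f.natDegree = 0 ∨ H.natDegree = 0) (x y : R) : f.evalEval x y = x := by
  rcases hdeg with hf | hH
  · rw [evalEval_eq_of_natDegree_eq_zero hf x y x, h.diag]
  · rw [← h.evalEval_right_absorb, evalEval_eq_of_natDegree_eq_zero hH _ _ x, h.diag_right]

end CommSemiring

section CommRing

variable {R : Type*} [CommRing R] [IsDomain R] [Infinite R] {f G H : R[X][Y]}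

theorem eval_coeff_left (h : IsBarycentricTriple f G H)
    (hf : f.natDegree ≠ 0) (x y : R) :
    (G.coeff (H.natDegree * f.natDegree)).eval (f.evalEval x y) =
      H.leadingCoeff.eval x * f.leadingCoeff.eval y ^ H.natDegree := by
  have hcomp : G.map (evalRingHom (f.evalEval x y)) =
      (H.map (evalRingHom x)).comp (f.map (evalRingHom y)) :=
    Polynomial.funext fun z => by simp only [eval_comp, map_evalRingHom_eval, h.assoc]
  simpa only [coeff_map, coe_evalRingHom, coeff_natDegree,
    coeff_comp_of_natDegree_le hf (natDegree_map_le (p := H)) (natDegree_map_le (p := f))]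
    using congrArg (fun p => p.coeff (H.natDegree * f.natDegree)) hcomp

theorem natDegree_leadingCoeff (h : IsBarycentricTriple f G H)
    (hf : f.natDegree ≠ 0) (hf' : (swap f).natDegree ≠ 0) (hH : H.natDegree ≠ 0) :
    f.leadingCoeff.natDegree = 0 := by
  have hpow := natDegree_eq_zero_of_eval_evalEval_eq h.diag hf hf'
    (leadingCoeff_ne_zero.2 (ne_zero_of_natDegree_gt hH.bot_lt))
    (pow_ne_zero H.natDegree (leadingCoeff_ne_zero.2 (ne_zero_of_natDegree_gt hf.bot_lt)))
    (fun x y => by rw [h.eval_coeff_left hf, eval_pow])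
  rw [natDegree_pow] at hpow
  exact (mul_eq_zero.1 hpow).resolve_left hH

theorem natDegree_eq_one (h : IsBarycentricTriple f G H)
    (hf' : (swap f).natDegree ≠ 0) (hH : H.natDegree ≠ 0)
    (hlc : f.leadingCoeff.natDegree = 0) (hlc' : (swap f).leadingCoeff.natDegree = 0)
    (hle : (swap f).natDegree ≤ f.natDegree) : f.natDegree = 1 := by
  have hf : f.leadingCoeff ≠ 0 :=
    leadingCoeff_ne_zero.2 (ne_zero_of_natDegree_gt (hf'.bot_lt.trans_le hle))
  obtain ⟨x, hx⟩ := exists_eval_ne_zero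
    (leadingCoeff_ne_zero.2 (ne_zero_of_natDegree_gt hH.bot_lt))
  set u := f.map (evalRingHom x)
  have hu : u.natDegree = f.natDegree :=
    natDegree_map_of_leadingCoeff_ne_zero _ (by
      rw [eq_C_of_natDegree_eq_zero hlc] at hf ⊢
      simpa using hf)
  have hcomp : (H.map (evalRingHom x)).comp (f.eval u) = u := Polynomial.funext fun y => by
    rw [eval_comp, map_evalRingHom_eval, eval_polynomial_eval, map_evalRingHom_eval,
      h.evalEval_right_absorb]
  have hdeg : (f.eval u).natDegree ≤ f.natDegree := by
    rw [← hu, ← congrArg natDegree hcomp, natDegree_comp,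
      natDegree_map_of_leadingCoeff_ne_zero (evalRingHom x) hx]
    exact Nat.le_mul_of_pos_left _ (Nat.pos_of_ne_zero hH)
  by_contra hne
  have htwo : 2 ≤ f.natDegree := by omega
  have hmul := mul_natDegree_le_natDegree_eval hlc hlc' hle hu.ge (hu ▸ htwo)
  rw [hu] at hmul
  nlinarith

theorem exists_affine_of_natDegree_swap_le (h : IsBarycentricTriple f G H)
    (hf' : (swap f).natDegree ≠ 0) (hG : (swap G).natDegree ≠ 0)
    (hH : H.natDegree ≠ 0) (hle : (swap f).natDegree ≤ f.natDegree) :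
    ∃ a b : R, a + b = 1 ∧ ∀ x y, f.evalEval x y = a * x + b * y := by
  have hf : f.natDegree ≠ 0 := by omega
  have hlc := h.natDegree_leadingCoeff hf hf' hH
  have hlc' := h.swap.natDegree_leadingCoeff hf' (by rwa [swap_swap_apply]) hG
  have hone := h.natDegree_eq_one hf' hH hlc hlc' hle
  exact exists_evalEval_eq_affine_of_natDegree_eq_one h.diag hone (hone ▸ hle) hlc

theorem exists_affine (h : IsBarycentricTriple f G H) :
    ∃ a b : R, a + b = 1 ∧ ∀ x y, f.evalEval x y = a * x + b * y := by
  by_cases hfst : f.natDegree = 0 ∨ H.natDegree = 0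
  · exact ⟨1, 0, add_zero 1, fun x y => by rw [h.evalEval_eq_left hfst]; ring⟩
  by_cases hsnd : (swap f).natDegree = 0 ∨ (swap G).natDegree = 0
  · refine ⟨0, 1, zero_add 1, fun x y => ?_⟩
    rw [← evalEval_swap, h.swap.evalEval_eq_left hsnd]
    ring
  push Not at hfst hsnd
  rcases le_total (swap f).natDegree f.natDegree with hle | hle
  · exact h.exists_affine_of_natDegree_swap_le hsnd.1 hsnd.2 hfst.2 hle
  · obtain ⟨b, a, hab, heval⟩ := h.swap.exists_affine_of_natDegree_swap_le
      (by simpa only [swap_swap_apply] using hfst.1) (by simpa only [swap_swap_apply] using hfst.2)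
      hsnd.2 (by rwa [swap_swap_apply])
    exact ⟨a, b, by rw [add_comm, hab], fun x y => by rw [← evalEval_swap, heval, add_comm]⟩

end CommRing

end IsBarycentricTriple

namespace BAssoc

section

variable {X : Type*} {F : ∀ n : ℕ, (Fin n → X) → X}

theorem apply_const_apply_s7 (hB : BAssoc F) {n : ℕ} (hn : 1 ≤ n) (y : Fin n → X) :
    F n (fun _ => F n y) = F n y := by
  have apply_cast : ∀ {m : ℕ} (hm : m = n) (v : Fin n → X), F m (v ∘ Fin.cast hm) = F n v := by
    rintro _ rfl _
    rfl
  have h := hB 0 0 n hn Fin.elim0 y Fin.elim0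
  simp only [Fin.append_elim0, Fin.elim0_append, Function.comp_assoc] at h
  have hcast : 0 + n + 0 = n := by omega
  exact (apply_cast hcast _).symm.trans (h.symm.trans (apply_cast hcast _))

theorem apply_three_left (hB : BAssoc F) (x y z : X) :
    F 3 ![x, y, z] = F 3 ![F 2 ![x, y], F 2 ![x, y], z] := by
  convert hB 0 1 2 one_le_two ![] ![x, y] ![z] using 2 <;>
    · ext i; fin_cases i <;> rfl

theorem apply_three_right (hB : BAssoc F) (x y z : X) :
    F 3 ![x, y, z] = F 3 ![x, F 2 ![y, z], F 2 ![y, z]] := by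
  convert hB 1 0 2 one_le_two ![x] ![y, z] ![] using 2 <;>
    · ext i; fin_cases i <;> rfl

theorem apply_three_constant_of_apply_two_constant (hB : BAssoc F)
    (h2 : ∃ c, ∀ x, F 2 x = c) : ∃ c, ∀ x, F 3 x = c := by
  obtain ⟨c, hc⟩ := h2
  refine ⟨F 3 ![c, c, c], fun x => ?_⟩
  calc F 3 x = F 3 ![x 0, x 1, x 2] := congrArg (F 3) (FinVec.etaExpand_eq x).symm
    _ = F 3 ![c, c, c] := by rw [hB.apply_three_left, hc, hB.apply_three_right, hc]

end

section

variable {R : Type*} [CommRing R] [IsDomain R] [Infinite R] {F : ∀ n : ℕ, (Fin n → R) → R}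

theorem apply_const_of_polynomial (hB : BAssoc F) {n : ℕ} (hn : 1 ≤ n)
    (hF : ∃ p : MvPolynomial (Fin n) R, ∀ x, F n x = MvPolynomial.eval x p)
    (hne : ¬ ∃ c, ∀ x, F n x = c) (t : R) : F n (fun _ => t) = t := by
  obtain ⟨p, hp⟩ := hF
  set q : R[X] := MvPolynomial.aeval (fun _ => X) p
  have hq : ∀ t, q.eval t = F n (fun _ => t) := fun t => by
    simpa [hp, q] using MvPolynomial.comp_aeval_apply (fun _ => X) (Polynomial.aeval t) p
  have hcomp : q.comp q = q := Polynomial.funext fun t => by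
    simp only [eval_comp, hq, hB.apply_const_apply_s7 hn]
  rcases eq_X_or_eq_C_of_comp_self hcomp with hX | hC
  · rw [← hq, hX, eval_X]
  · refine absurd ⟨q.coeff 0, fun x => ?_⟩ hne
    rw [← hB.apply_const_apply_s7 hn, ← hq, hC, eval_C, coeff_C_zero]

theorem exists_isBarycentricTriple (hB : BAssoc F)
    (h2 : ∃ p : MvPolynomial (Fin 2) R, ∀ x, F 2 x = MvPolynomial.eval x p)
    (h3 : ∃ p : MvPolynomial (Fin 3) R, ∀ x, F 3 x = MvPolynomial.eval x p)
    (hne : ¬ ∃ c, ∀ x, F 3 x = c) :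
    ∃ f G H : R[X][Y], IsBarycentricTriple f G H ∧ ∀ x, F 2 x = f.evalEval (x 0) (x 1) := by
  have hdiag₂ := hB.apply_const_of_polynomial one_le_two h2
    (mt hB.apply_three_constant_of_apply_two_constant hne)
  have hdiag₃ := hB.apply_const_of_polynomial (by norm_num) h3 hne
  obtain ⟨p, hp⟩ := h2
  obtain ⟨r, hr⟩ := h3
  obtain ⟨f, hf⟩ : ∃ f : R[X][Y], ∀ x y, f.evalEval x y = F 2 ![x, y] :=
    ⟨MvPolynomial.aeval ![C X, Y] p, fun x y => by
      rw [evalEval_aeval, hp]; congr 2; ext i; fin_cases i <;> simp [evalEval_C]⟩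
  obtain ⟨G, hG⟩ : ∃ G : R[X][Y], ∀ s z, G.evalEval s z = F 3 ![s, s, z] :=
    ⟨MvPolynomial.aeval ![C X, C X, Y] r, fun s z => by
      rw [evalEval_aeval, hr]; congr 2; ext i; fin_cases i <;> simp [evalEval_C]⟩
  obtain ⟨H, hH⟩ : ∃ H : R[X][Y], ∀ x t, H.evalEval x t = F 3 ![x, t, t] :=
    ⟨MvPolynomial.aeval ![C X, Y, Y] r, fun x t => by
      rw [evalEval_aeval, hr]; congr 2; ext i; fin_cases i <;> simp [evalEval_C]⟩
  refine ⟨f, G, H, ⟨fun t => ?_, fun t => ?_, fun x y z => ?_⟩, fun x => ?_⟩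
  · rw [hf]
    exact (congrArg (F 2) (FinVec.etaExpand_eq fun _ => t)).trans (hdiag₂ t)
  · rw [hG]
    exact (congrArg (F 3) (FinVec.etaExpand_eq fun _ => t)).trans (hdiag₃ t)
  · rw [hG, hf, hf, hH, ← hB.apply_three_left, hB.apply_three_right]
  · rw [hf]
    exact congrArg (F 2) (FinVec.etaExpand_eq x).symm

theorem exists_apply_two_eq_affine (hB : BAssoc F)
    (h2 : ∃ p : MvPolynomial (Fin 2) R, ∀ x, F 2 x = MvPolynomial.eval x p)
    (h3 : ∃ p : MvPolynomial (Fin 3) R, ∀ x, F 3 x = MvPolynomial.eval x p)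
    (hne : ¬ ∃ c, ∀ x, F 3 x = c) :
    ∃ a b : R, a + b = 1 ∧ ∀ x, F 2 x = a * x 0 + b * x 1 := by
  obtain ⟨f, G, H, h, hf⟩ := hB.exists_isBarycentricTriple h2 h3 hne
  obtain ⟨a, b, hab, heval⟩ := h.exists_affine
  exact ⟨a, b, hab, fun x => by rw [hf, heval]⟩

end

end BAssoc

theorem degree_F2_eq_one_general {R : Type*} [CommRing R] [IsDomain R] [Infinite R]
    (F : ∀ n : ℕ, (Fin n → R) → R)
    (h2 : ∃ p : MvPolynomial (Fin 2) R, ∀ x : Fin 2 → R, F 2 x = MvPolynomial.eval x p)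
    (h3 : ∃ p : MvPolynomial (Fin 3) R, ∀ x : Fin 3 → R, F 3 x = MvPolynomial.eval x p)
    (hB : BAssoc F)
    (hne : ¬ ∃ c : R, ∀ x : Fin 3 → R, F 3 x = c) :
    ∃ p : MvPolynomial (Fin 2) R,
      (∀ x : Fin 2 → R, F 2 x = MvPolynomial.eval x p) ∧ p.totalDegree = 1 := by
  obtain ⟨a, b, hab, hF⟩ := hB.exists_apply_two_eq_affine h2 h3 hne
  set p : MvPolynomial (Fin 2) R := .C a * .X 0 + .C b * .X 1
  have hp : ∀ x, F 2 x = MvPolynomial.eval x p := fun x => by simp [p, hF]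
  have hp₀ : p ≠ 0 := fun h => one_ne_zero (α := R) (by
    simpa [h, hF, hab] using hp (fun _ => 1))
  have hhom : p.IsHomogeneous 1 :=
    (MvPolynomial.isHomogeneous_C_mul_X a 0).add (MvPolynomial.isHomogeneous_C_mul_X b 1)
  exact ⟨p, hp, hhom.totalDegree hp₀⟩

/-- Proposition: if `F` is a B-associative `*`-ary polynomial function on an infinite
field `R` and `F_3` is nonconstant, then `F_2` is a polynomial function of (total)
degree `1`. -/
theorem degree_F2_eq_one
    {R : Type*} [Field R] [Infinite R]
    (F : ∀ n : ℕ, (Fin n → R) → R)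
    (hpoly : ∀ n : ℕ, 1 ≤ n →
      ∃ p : MvPolynomial (Fin n) R, ∀ x : Fin n → R, F n x = MvPolynomial.eval x p)
    (hB : BAssoc F)
    (h3 : ¬ ∃ c : R, ∀ x : Fin 3 → R, F 3 x = c) :
    ∃ p : MvPolynomial (Fin 2) R,
      (∀ x : Fin 2 → R, F 2 x = MvPolynomial.eval x p) ∧ p.totalDegree = 1 :=
  degree_F2_eq_one_general F (hpoly 2 (by norm_num)) (hpoly 3 (by norm_num)) hB h3
end

section
/- Let R be an infinite commutative integral domain and let Q : R² → R be a polynomial function. Define a *-ary function F on R by F_1(x) = x, F_2(x,y) = Q(x,y)·x + (1 − Q(x,y))·y, and F_n a constant function for every n ≥ 3 (all these constants being equal to some fixed c ∈ R). Then F is barycentrically associative. -/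
/-!
In a tuple of length at least `3` both sides are the same constant, so only blocks in tuples of
length at most `2` matter. A block of length `1` is left unchanged because `F_1` is the identity,
and a block of length `2` is then the whole tuple, where the affine combination of two equal
entries `t` with coefficients `Q(t, t)` and `1 - Q(t, t)` is again `t`.
-/

/-- A `k`-ary operation is range-idempotent if `k` copies of any of its values are mapped back to
that value. This is barycentric associativity when the block is the whole tuple. -/
def RangeIdempotent {X : Type*} {k : ℕ} (f : (Fin k → X) → X) : Prop :=
  ∀ y : Fin k → X, f (fun _ => f y) = f y

section TupleFamily

variable {X Y : Type*} (F : ∀ n : ℕ, (Fin n → X) → Y)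

theorem apply_comp_finCast {m n : ℕ} (h : m = n) (y : Fin n → X) :
    F m (y ∘ Fin.cast h) = F n y := by
  subst h
  rfl

theorem apply_append_append_empty {k : ℕ} (x : Fin 0 → X) (y : Fin k → X) (z : Fin 0 → X) :
    F (0 + k + 0) (Fin.append (Fin.append x y) z) = F k y := by
  rw [Subsingleton.elim x Fin.elim0, Subsingleton.elim z Fin.elim0, Fin.append_elim0,
    Fin.elim0_append, apply_comp_finCast F, apply_comp_finCast F]

end TupleFamily

theorem const_apply_eq_self_of_unary {X : Type*} {f : (Fin 1 → X) → X}
    (hf : ∀ x, f x = x 0) (y : Fin 1 → X) : (fun _ => f y) = y := by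
  funext i
  rw [hf, Subsingleton.elim i 0]

theorem bassoc_of_rangeIdempotent_two_of_const {X : Type*} {F : ∀ n : ℕ, (Fin n → X) → X}
    (hone : ∀ x : Fin 1 → X, F 1 x = x 0)
    (htwo : RangeIdempotent (F 2))
    (hconst : ∀ n : ℕ, 3 ≤ n → ∀ x y : Fin n → X, F n x = F n y) :
    BAssoc F := by
  intro a b k hk x y z
  by_cases hn : 3 ≤ a + k + b
  · exact hconst _ hn _ _
  obtain rfl | ⟨rfl, rfl, rfl⟩ : k = 1 ∨ (k = 2 ∧ a = 0 ∧ b = 0) := by omega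
  · rw [const_apply_eq_self_of_unary hone]
  · calc F (0 + 2 + 0) (Fin.append (Fin.append x y) z)
      _ = F 2 y := apply_append_append_empty F x y z
      _ = F 2 (fun _ => F 2 y) := (htwo y).symm
      _ = F (0 + 2 + 0) (Fin.append (Fin.append x fun _ => F 2 y) z) :=
        (apply_append_append_empty F x _ z).symm

theorem bassoc_of_binary_Q_general
    {R M : Type*} [Ring R] [AddCommGroup M] [Module R M]
    (Q : M → M → R) (F : ∀ n : ℕ, (Fin n → M) → M)
    (hone : ∀ x : Fin 1 → M, F 1 x = x 0)
    (htwo : ∀ x : Fin 2 → M, F 2 x = Q (x 0) (x 1) • x 0 + (1 - Q (x 0) (x 1)) • x 1)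
    (hconst : ∀ n : ℕ, 3 ≤ n → ∀ x y : Fin n → M, F n x = F n y) :
    BAssoc F :=
  bassoc_of_rangeIdempotent_two_of_const hone
    (fun _ => (htwo _).trans smul_add_one_sub_smul) hconst

/-- Over an infinite commutative integral domain `R`, given a binary polynomial function
`Q`, the `*`-ary function `F` with `F_1(x) = x`, `F_2(x,y) = Q(x,y)·x + (1 - Q(x,y))·y`,
and `F_n` constant (equal to a fixed `c`) for every `n ≥ 3`, is barycentrically
associative. -/
theorem bassoc_of_binary_Q
    {R : Type*} [CommRing R] [IsDomain R] [Infinite R]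
    (Q : R → R → R)
    (hQ : ∃ q : MvPolynomial (Fin 2) R, ∀ a b : R, Q a b = MvPolynomial.eval ![a, b] q)
    (c : R) (F : ∀ n : ℕ, (Fin n → R) → R)
    (h1 : ∀ x : Fin 1 → R, F 1 x = x 0)
    (h2 : ∀ x : Fin 2 → R, F 2 x = Q (x 0) (x 1) * x 0 + (1 - Q (x 0) (x 1)) * x 1)
    (h3 : ∀ n : ℕ, 3 ≤ n → ∀ x : Fin n → R, F n x = c) :
    BAssoc F :=
  bassoc_of_binary_Q_general Q F h1 h2 fun n hn x y => (h3 n hn x).trans (h3 n hn y).symm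
end

section
/- Let R be an infinite commutative integral domain with fraction field K = Frac(R), and let F be a *-ary polynomial function on R, where F_n is given by a polynomial p_n ∈ R[x_1,…,x_n] for each n ≥ 1. Let F̄ be the *-ary polynomial function on K whose n-ary part is given by evaluating the same polynomial p_n over K. If F is barycentrically associative (on R), then F̄ is barycentrically associative (on K). -/
/-!
The evaluations `R[σ] → R` commute with the polynomial functions given by `p` and, since `R` is an
infinite domain, they jointly separate the points of `R[σ]`. So B-associativity passes from `R` to
`R[σ]`, and from there to every `R`-algebra, each of which is a quotient of some `R[σ]`.
-/

theorem comp_finAppend {X Y : Type*} (f : X → Y) {m n : ℕ} (x : Fin m → X) (y : Fin n → X) :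
    f ∘ Fin.append x y = Fin.append (f ∘ x) (f ∘ y) := by
  ext i
  cases i using Fin.addCases <;> simp

/-- A homomorphism from the `*`-ary function `F` on `X` to the `*`-ary function `G` on `Y`: a map
`X → Y` commuting with the `n`-ary parts for all `n`, including `n = 0`. -/
def IsStarHom {X Y : Type*} (F : ∀ n : ℕ, (Fin n → X) → X) (G : ∀ n : ℕ, (Fin n → Y) → Y)
    (f : X → Y) : Prop :=
  ∀ (n : ℕ) (x : Fin n → X), f (F n x) = G n (f ∘ x)

section StarHom

variable {X Y : Type*} {F : ∀ n : ℕ, (Fin n → X) → X} {G : ∀ n : ℕ, (Fin n → Y) → Y}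

theorem IsStarHom.map_append_append {f : X → Y} (hf : IsStarHom F G f) {a k b : ℕ}
    (x : Fin a → X) (y : Fin k → X) (z : Fin b → X) :
    f (F (a + k + b) (Fin.append (Fin.append x y) z)) =
      G (a + k + b) (Fin.append (Fin.append (f ∘ x) (f ∘ y)) (f ∘ z)) := by
  rw [hf, comp_finAppend, comp_finAppend]

theorem IsStarHom.map_append_const_append {f : X → Y} (hf : IsStarHom F G f) {a k b : ℕ}
    (x : Fin a → X) (y : Fin k → X) (z : Fin b → X) :
    f (F (a + k + b) (Fin.append (Fin.append x fun _ : Fin k => F k y) z)) =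
      G (a + k + b) (Fin.append (Fin.append (f ∘ x) fun _ : Fin k => G k (f ∘ y)) (f ∘ z)) := by
  rw [hf.map_append_append, ← hf k y]
  rfl

theorem BAssoc.of_surjective (hF : BAssoc F) {f : X → Y} (hf : IsStarHom F G f)
    (hsurj : Function.Surjective f) : BAssoc G := by
  intro a b k hk x y z
  obtain ⟨x, rfl⟩ := hsurj.comp_left x
  obtain ⟨y, rfl⟩ := hsurj.comp_left y
  obtain ⟨z, rfl⟩ := hsurj.comp_left z
  rw [← hf.map_append_append, ← hf.map_append_const_append, hF a b k hk]

theorem BAssoc.of_jointly_injective (hG : BAssoc G) {ι : Sort*} {f : ι → X → Y}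
    (hf : ∀ i, IsStarHom F G (f i)) (hinj : ∀ u v, (∀ i, f i u = f i v) → u = v) : BAssoc F := by
  intro a b k hk x y z
  refine hinj _ _ fun i => ?_
  rw [(hf i).map_append_append, (hf i).map_append_const_append, hG a b k hk]

end StarHom

section PolynomialFunction

open MvPolynomial

/-- The `*`-ary polynomial function on an `R`-algebra `A` whose `n`-ary part evaluates the
polynomial `p n`. The coefficients stay in `R` so that one family `p` acts on every algebra. -/
noncomputable def starPolynomialFunction {R : Type*} [CommSemiring R]
    (p : ∀ n : ℕ, MvPolynomial (Fin n) R) (A : Type*) [CommSemiring A] [Algebra R A] :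
    ∀ n : ℕ, (Fin n → A) → A :=
  fun n x => aeval x (p n)

theorem starPolynomialFunction_eq_eval_map {R : Type*} [CommSemiring R]
    (p : ∀ n : ℕ, MvPolynomial (Fin n) R) (A : Type*) [CommSemiring A] [Algebra R A] :
    starPolynomialFunction p A = fun n x => eval x (map (algebraMap R A) (p n)) := by
  funext n x
  rw [eval_map]
  rfl

theorem isStarHom_starPolynomialFunction {R : Type*} [CommSemiring R]
    {A B : Type*} [CommSemiring A] [Algebra R A] [CommSemiring B] [Algebra R B]
    (p : ∀ n : ℕ, MvPolynomial (Fin n) R) (φ : A →ₐ[R] B) :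
    IsStarHom (starPolynomialFunction p A) (starPolynomialFunction p B) φ :=
  fun n x => comp_aeval_apply x φ (p n)

theorem BAssoc.starPolynomialFunction_mvPolynomial
    {R : Type*} [CommRing R] [IsDomain R] [Infinite R] {p : ∀ n : ℕ, MvPolynomial (Fin n) R}
    (hp : BAssoc (starPolynomialFunction p R)) (σ : Type*) :
    BAssoc (starPolynomialFunction p (MvPolynomial σ R)) :=
  hp.of_jointly_injective
    (fun v : σ → R => isStarHom_starPolynomialFunction p (aeval v))
    (fun _ _ h => MvPolynomial.funext h)

end PolynomialFunction

theorem bassoc_extend_to_fractionField_general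
    {R : Type*} [CommRing R] [IsDomain R] [Infinite R]
    {A : Type*} [CommSemiring A] [Algebra R A]
    (p : ∀ n : ℕ, MvPolynomial (Fin n) R)
    (hF : BAssoc (fun n (x : Fin n → R) => MvPolynomial.eval x (p n))) :
    BAssoc (fun n (x : Fin n → A) =>
      MvPolynomial.eval x (MvPolynomial.map (algebraMap R A) (p n))) := by
  have hp : BAssoc (starPolynomialFunction p R) := hF
  have hA : BAssoc (starPolynomialFunction p A) :=
    (hp.starPolynomialFunction_mvPolynomial A).of_surjective
      (isStarHom_starPolynomialFunction p (MvPolynomial.aeval id))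
      fun r => ⟨MvPolynomial.X r, MvPolynomial.aeval_X id r⟩
  rwa [starPolynomialFunction_eq_eval_map] at hA

/-- Let `R` be an infinite commutative integral domain with fraction field `K`, and let
`F` be the `*`-ary polynomial function on `R` whose `n`-ary part is given by the
polynomial `p n ∈ R[x_1,…,x_n]`. If `F` is B-associative over `R`, then the `*`-ary
polynomial function on `K` obtained by evaluating the same polynomials over `K` is
B-associative over `K`. -/
theorem bassoc_extend_to_fractionField
    {R : Type*} [CommRing R] [IsDomain R] [Infinite R]
    {K : Type*} [Field K] [Algebra R K] [IsFractionRing R K]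
    (p : ∀ n : ℕ, MvPolynomial (Fin n) R)
    (hF : BAssoc (fun n (x : Fin n → R) => MvPolynomial.eval x (p n))) :
    BAssoc (fun n (x : Fin n → K) =>
      MvPolynomial.eval x (MvPolynomial.map (algebraMap R K) (p n))) :=
  bassoc_extend_to_fractionField_general p hF
end

section
/- Let R be an infinite field and let P : R² → R and G : R² → R be idempotent binary polynomial functions satisfying P(G(x₁,x₂), x₃) = P(G(x₁, G(x₂,x₃)), G(x₂,x₃)) for all x₁, x₂, x₃ ∈ R. Write P(x,y) = Σ_{i=0}^p x^i P_i(y) and G(x,y) = Σ_{j=0}^q x^j Q_j(y), where P_i, Q_j : R → R are polynomial functions with P_p ≠ 0 and Q_q ≠ 0 (so p and q are the degrees of P and G in the first variable). If p > 0 and q > 0, then the polynomial functions P_p and Q_q are constant. -/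
/-!
Compare the coefficients of `x₁ ^ (p * q)` in the functional equation: with `A = P_p`, `B = Q_q`
and `H = A * B ^ p` this gives `A(z) * B(y) ^ p = H(G(y, z))`. Fix `z` with `B(z) ≠ 0`, so that
`G(·, z)` has degree `q`, and compare degrees in `y`: `(deg A + p * deg B) * q ≤ p * deg B`. As
`q > 0`, this forces `deg A = 0`, and also `q = 1` unless `deg B = 0`. If `q = 1`, idempotence gives
`G(0, z) = z * (1 - B(z))`; the identity at `y = 0` then says that `H(z * (1 - B(z)))` is constant
in `z`, which is impossible when `deg B > 0`.
-/

section

open Polynomial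

theorem coeff_comp_mul_of_natDegree_le {R : Type*} [Semiring R] {f g : R[X]} {m n : ℕ}
    (hn : 0 < n) (hf : f.natDegree ≤ m) (hg : g.natDegree ≤ n) :
    (f.comp g).coeff (m * n) = f.coeff m * g.coeff n ^ m := by
  have lower_terms (i : ℕ) (hi : i < m) : (C (f.coeff i) * g ^ i).coeff (m * n) = 0 := by
    have hdeg : (g ^ i).natDegree < m * n :=
      (natDegree_pow_le_of_le i hg).trans_lt (Nat.mul_lt_mul_of_pos_right hi hn)
    rw [coeff_C_mul, coeff_eq_zero_of_natDegree_lt hdeg, mul_zero]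
  rw [comp, eval₂_eq_sum_range' C (Nat.lt_succ_of_le hf), finsetSum_coeff, Finset.sum_range_succ,
    Finset.sum_eq_zero fun i hi => lower_terms i (Finset.mem_range.1 hi), zero_add, coeff_C_mul,
    coeff_pow_of_natDegree_le hg]

section CommSemiring

variable {R : Type*} [CommSemiring R]

theorem exists_natDegree_le_and_coeff_eq_and_eval_eq_sum (n : ℕ) (c : ℕ → R) :
    ∃ f : R[X], f.natDegree ≤ n ∧ f.coeff n = c n ∧
      ∀ x, f.eval x = ∑ i ∈ Finset.range (n + 1), x ^ i * c i := by
  refine ⟨∑ i ∈ Finset.range (n + 1), C (c i) * X ^ i, ?_, ?_, fun x => ?_⟩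
  · refine natDegree_sum_le_of_forall_le _ _ fun i hi => ?_
    exact (natDegree_C_mul_X_pow_le _ _).trans (Finset.mem_range_succ_iff.1 hi)
  · simp only [finsetSum_coeff, coeff_C_mul_X_pow, Finset.sum_ite_eq, Finset.self_mem_range_succ,
      if_true]
  · simp only [eval_finsetSum, eval_C_mul, eval_X_pow, mul_comm (x ^ _)]

variable [NoZeroDivisors R]

theorem natDegree_eq_zero_of_natDegree_mul_comp_le {A F g : R[X]} (hA : A ≠ 0) (hF : F ≠ 0)
    (hg : 0 < g.natDegree) (h : ((A * F).comp g).natDegree ≤ F.natDegree) : A.natDegree = 0 := by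
  rw [natDegree_comp, natDegree_mul hA hF] at h
  have := Nat.le_mul_of_pos_right (A.natDegree + F.natDegree) hg
  omega

theorem natDegree_le_one_of_natDegree_mul_comp_le {A F g : R[X]} (hA : A ≠ 0)
    (hF : 0 < F.natDegree) (h : ((A * F).comp g).natDegree ≤ F.natDegree) : g.natDegree ≤ 1 := by
  rw [natDegree_comp, natDegree_mul hA (ne_zero_of_natDegree_gt hF)] at h
  refine Nat.le_of_mul_le_mul_left ?_ hF
  calc F.natDegree * g.natDegree ≤ (A.natDegree + F.natDegree) * g.natDegree := by gcongr; omega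
    _ ≤ F.natDegree * 1 := by rwa [mul_one]

end CommSemiring

section CommRing

variable {R : Type*} [CommRing R]

theorem eval_zero_of_natDegree_le_one_of_eval_eq_self {g : R[X]} {z : R} (hg : g.natDegree ≤ 1)
    (hz : g.eval z = z) : g.eval 0 = z * (1 - g.coeff 1) := by
  rw [eq_X_add_C_of_natDegree_le_one hg] at hz ⊢
  simp only [eval_add, eval_mul, eval_C, eval_X, coeff_add, coeff_C_mul, coeff_X_one,
    coeff_C_succ] at hz ⊢
  linear_combination hz

variable [IsDomain R]

theorem natDegree_eq_zero_of_natDegree_comp_X_mul_one_sub_eq_zero {B H : R[X]}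
    (hH : 0 < H.natDegree) (h : (H.comp (X * (1 - B))).natDegree = 0) : B.natDegree = 0 := by
  by_contra hB
  have hne : 1 - B ≠ 0 := fun h0 => hB (by rw [← sub_eq_zero.1 h0, natDegree_one])
  rw [natDegree_comp, natDegree_X_mul hne] at h
  exact absurd h (Nat.mul_ne_zero hH.ne' (Nat.succ_ne_zero _))

variable [Infinite R]

theorem coeff_mul_coeff_pow_eq_of_eval_eval_eq {f₁ f₂ g₁ g₂ : R[X]} {m n : ℕ} (hn : 0 < n)
    (hf₁ : f₁.natDegree ≤ m) (hf₂ : f₂.natDegree ≤ m) (hg₁ : g₁.natDegree ≤ n)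
    (hg₂ : g₂.natDegree ≤ n) (h : ∀ x, f₁.eval (g₁.eval x) = f₂.eval (g₂.eval x)) :
    f₁.coeff m * g₁.coeff n ^ m = f₂.coeff m * g₂.coeff n ^ m := by
  have hcomp : f₁.comp g₁ = f₂.comp g₂ := Polynomial.funext (by simpa only [eval_comp] using h)
  rw [← coeff_comp_mul_of_natDegree_le hn hf₁ hg₁, hcomp,
    coeff_comp_mul_of_natDegree_le hn hf₂ hg₂]

theorem natDegree_comp_le_of_mul_eval_eq {F H g : R[X]} {a : R}
    (h : ∀ y, a * F.eval y = H.eval (g.eval y)) : (H.comp g).natDegree ≤ F.natDegree := by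
  have hcomp : H.comp g = C a * F :=
    Polynomial.funext fun y => by rw [eval_comp, ← h, eval_C_mul]
  exact hcomp ▸ natDegree_C_mul_le a F

theorem natDegree_eq_zero_of_mul_pow_eval_eq_eval_mul_pow {A B : R[X]} {G : R → R[X]} {p q : ℕ}
    (hp : 0 < p) (hq : 0 < q) (hA : A ≠ 0) (hB : B ≠ 0) (hGdeg : ∀ z, (G z).natDegree ≤ q)
    (hGcoeff : ∀ z, (G z).coeff q = B.eval z) (hGidem : ∀ z, (G z).eval z = z)
    (h : ∀ y z, A.eval z * (B ^ p).eval y = (A * B ^ p).eval ((G z).eval y)) :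
    A.natDegree = 0 ∧ B.natDegree = 0 := by
  obtain ⟨z, hz⟩ : ∃ z, B.eval z ≠ 0 := by
    by_contra! hzero
    exact hB (Polynomial.funext fun z => by rw [hzero, eval_zero])
  have hGz : (G z).natDegree = q :=
    natDegree_eq_of_le_of_coeff_ne_zero (hGdeg z) (by rwa [hGcoeff])
  have hcomp : ((A * B ^ p).comp (G z)).natDegree ≤ (B ^ p).natDegree :=
    natDegree_comp_le_of_mul_eval_eq fun y => h y z
  have hA0 : A.natDegree = 0 :=
    natDegree_eq_zero_of_natDegree_mul_comp_le hA (pow_ne_zero p hB) (hGz ▸ hq) hcomp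
  refine ⟨hA0, by_contra fun hB0 => hB0 ?_⟩
  have hBp : 0 < (B ^ p).natDegree := by
    rw [natDegree_pow]
    exact Nat.mul_pos hp (Nat.pos_of_ne_zero hB0)
  have hq1 : q = 1 :=
    le_antisymm (hGz ▸ natDegree_le_one_of_natDegree_mul_comp_le hA hBp hcomp) hq
  subst hq1
  refine natDegree_eq_zero_of_natDegree_comp_X_mul_one_sub_eq_zero (H := A * B ^ p) ?_ ?_
  · rwa [natDegree_mul hA (pow_ne_zero p hB), hA0, zero_add]
  · refine Nat.le_zero.1 ((natDegree_comp_le_of_mul_eval_eq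
      (a := (B ^ p).eval 0) fun z => ?_).trans_eq hA0)
    have hG0 := eval_zero_of_natDegree_le_one_of_eval_eq_self (hGdeg z) (hGidem z)
    simpa only [hG0, hGcoeff, mul_comm (A.eval z), eval_mul, eval_X, eval_sub, eval_one] using h 0 z

end CommRing

end

theorem leading_coefficients_constant_general
    {R : Type*} [CommRing R] [IsDomain R] [Infinite R]
    {p q : ℕ} (hp : 0 < p) (hq : 0 < q)
    {P G : R → R → R} {Pc Qc : ℕ → R → R}
    (hPc : ∃ f : Polynomial R, ∀ y : R, Pc p y = f.eval y)
    (hQc : ∃ f : Polynomial R, ∀ y : R, Qc q y = f.eval y)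
    (hPdef : ∀ x y : R, P x y = ∑ i ∈ Finset.range (p + 1), x ^ i * Pc i y)
    (hGdef : ∀ x y : R, G x y = ∑ j ∈ Finset.range (q + 1), x ^ j * Qc j y)
    (hPp : ∃ y : R, Pc p y ≠ 0) (hQq : ∃ y : R, Qc q y ≠ 0)
    (hGidem : ∀ x : R, G x x = x)
    (heq : ∀ x₁ x₂ x₃ : R, P (G x₁ x₂) x₃ = P (G x₁ (G x₂ x₃)) (G x₂ x₃)) :
    (∃ c : R, ∀ y : R, Pc p y = c) ∧ (∃ c : R, ∀ y : R, Qc q y = c) := by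
  obtain ⟨A, hA⟩ := hPc
  obtain ⟨B, hB⟩ := hQc
  have hA0 : A ≠ 0 := by rintro rfl; simp [hA] at hPp
  have hB0 : B ≠ 0 := by rintro rfl; simp [hB] at hQq
  choose Ps hPdeg hPcoeff hPeval using
    fun y => exists_natDegree_le_and_coeff_eq_and_eval_eq_sum p (Pc · y)
  choose Gs hGdeg hGcoeff hGeval using
    fun y => exists_natDegree_le_and_coeff_eq_and_eval_eq_sum q (Qc · y)
  have hPs (x y : R) : P x y = (Ps y).eval x := by rw [hPdef, hPeval]
  have hGs (x y : R) : G x y = (Gs y).eval x := by rw [hGdef, hGeval]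
  have hlead (y z : R) :
      A.eval z * (B ^ p).eval y = (A * B ^ p).eval ((Gs z).eval y) := by
    have hcoeff := coeff_mul_coeff_pow_eq_of_eval_eval_eq hq (hPdeg z) (hPdeg (G y z))
      (hGdeg y) (hGdeg (G y z)) fun x => by simpa only [hPs, hGs] using heq x y z
    simpa only [hPcoeff, hGcoeff, hA, hB, hGs, Polynomial.eval_mul, Polynomial.eval_pow]
      using hcoeff
  obtain ⟨hAdeg, hBdeg⟩ := natDegree_eq_zero_of_mul_pow_eval_eq_eval_mul_pow hp hq hA0 hB0
    hGdeg (fun z => (hGcoeff z).trans (hB z)) (fun z => (hGs z z).symm.trans (hGidem z)) hlead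
  obtain ⟨a, rfl⟩ := Polynomial.natDegree_eq_zero.1 hAdeg
  obtain ⟨b, rfl⟩ := Polynomial.natDegree_eq_zero.1 hBdeg
  exact ⟨⟨a, fun y => by rw [hA, Polynomial.eval_C]⟩, ⟨b, fun y => by rw [hB, Polynomial.eval_C]⟩⟩

/-- Claim (inside Proposition 3): let `R` be an infinite field and let `P, G : R² → R` be
idempotent binary polynomial functions satisfying
`P(G(x₁,x₂), x₃) = P(G(x₁,G(x₂,x₃)), G(x₂,x₃))`. Write `P(x,y) = Σ_{i=0}^p x^i Pᵢ(y)`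
and `G(x,y) = Σ_{j=0}^q x^j Qⱼ(y)` with polynomial functions `Pᵢ, Qⱼ : R → R`,
`P_p ≠ 0` and `Q_q ≠ 0`. If `p > 0` and `q > 0`, then `P_p` and `Q_q` are constant. -/
theorem leading_coefficients_constant
    {R : Type*} [Field R] [Infinite R]
    (p q : ℕ) (hp : 0 < p) (hq : 0 < q)
    (P G : R → R → R) (Pc Qc : ℕ → R → R)
    (hPc : ∀ i : ℕ, ∃ f : Polynomial R, ∀ y : R, Pc i y = f.eval y)
    (hQc : ∀ j : ℕ, ∃ f : Polynomial R, ∀ y : R, Qc j y = f.eval y)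
    (hPdef : ∀ x y : R, P x y = ∑ i ∈ Finset.range (p + 1), x ^ i * Pc i y)
    (hGdef : ∀ x y : R, G x y = ∑ j ∈ Finset.range (q + 1), x ^ j * Qc j y)
    (hPp : ∃ y : R, Pc p y ≠ 0) (hQq : ∃ y : R, Qc q y ≠ 0)
    (hPidem : ∀ x : R, P x x = x) (hGidem : ∀ x : R, G x x = x)
    (heq : ∀ x₁ x₂ x₃ : R, P (G x₁ x₂) x₃ = P (G x₁ (G x₂ x₃)) (G x₂ x₃)) :
    (∃ c : R, ∀ y : R, Pc p y = c) ∧ (∃ c : R, ∀ y : R, Qc q y = c) :=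
  leading_coefficients_constant_general hp hq (hPc p) (hQc q) hPdef hGdef hPp hQq hGidem heq
end
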